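/- In the blow-up setup, the sup norms blow up: ‖u_i‖_{L^∞(B)} → +∞ as i → ∞. -/

import Mathlib

/-!
For a radial function on the ball of `ℝⁿ`, with `d = n - 1`, the operator `Δ^k` factors into `2k`
weighted first order derivatives: `w₀ = u`, `w₁ = r^d u'`, `w₂ = r^(-d) w₁' = Δu`, …, `w_(2k) = Δ^k u`
(`Chain`, `radChain_chain`). The Dirichlet conditions become `w_j(1) = 0` for `j < k`.

Suppose the sup norms do not blow up. Along a subsequence `|u_i| ≤ C`, and the chains, divided by the
largest sup norm of their functions, are equicontinuous, so that a further subsequence converges to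
a nontrivial chain with `w_(2k) = V w₀` and `V ≥ 0` (`chain_compact`). The Pohozaev identity gives
`w_k(1)² ≤ 2k λ_i sup |u_i|²` (`Chain.poho_bound`); since `λ_i → 0`, the limit chain satisfies the
additional condition `w_k(1) = 0`.

Such a chain vanishes (`Chain.eq_zero`). The function `w_j` vanishes at `0` if `j` is odd and at `1`
if `j ≤ k`, so by Rolle's theorem sign changes are never lost in passing from `w_j` to `w_(j+1)`, and
the additional zero at the boundary makes `w_(2k)` have strictly more sign changes than `w₀`. As
`w_(2k) = V w₀` with `V ≥ 0`, every sign change of `w_(2k)` is one of `w₀`, which produces arbitrarily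
many of them; but a nontrivial chain with bounded `V` has only finitely many.

Neither the sign of `Δ^k` nor the bound in `L^(2*)` plays a role in this argument.
-/
open MeasureTheory Metric Filter Topology Real

noncomputable section

def lap {n : ℕ} (u : EuclideanSpace ℝ (Fin n) → ℝ) : EuclideanSpace ℝ (Fin n) → ℝ :=
  fun x => ∑ i : Fin n, iteratedFDeriv ℝ 2 u x (fun _ => EuclideanSpace.single i 1)

def iterLap {n : ℕ} (k : ℕ) (u : EuclideanSpace ℝ (Fin n) → ℝ) :
    EuclideanSpace ℝ (Fin n) → ℝ :=
  lap^[k] u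

def twoStar (n k : ℕ) : ℝ := 2 * n / ((n : ℝ) - 2 * k)

def ank (n k : ℕ) : ℝ :=
  (∏ j ∈ Finset.range (2 * k), ((n : ℝ) + 2 * ((j : ℝ) - (k : ℝ)))) ^ (-(1 : ℝ) / (k : ℝ))

def Ubub (n k : ℕ) (x : EuclideanSpace ℝ (Fin n)) : ℝ :=
  (1 / (1 + ank n k * ‖x‖ ^ 2)) ^ (((n : ℝ) - 2 * k) / 2)

def BlowUpSetup (n k : ℕ) (M : ℝ) (lam : ℕ → ℝ)
    (u : ℕ → EuclideanSpace ℝ (Fin n) → ℝ) : Prop :=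
  (∀ i, 0 < lam i) ∧ Filter.Tendsto lam Filter.atTop (nhds 0) ∧
  (∀ i, ContDiff ℝ (2 * k : ℕ) (u i)) ∧
  (∀ i, ∀ x y : EuclideanSpace ℝ (Fin n), ‖x‖ = ‖y‖ → u i x = u i y) ∧
  (∀ i, ∀ x ∈ Metric.ball (0 : EuclideanSpace ℝ (Fin n)) 1,
    iterLap k (u i) x - lam i * u i x = |u i x| ^ (twoStar n k - 2) * u i x) ∧
  (∀ i, ∀ x : EuclideanSpace ℝ (Fin n), ‖x‖ = 1 → ∀ j < k,
    iteratedFDeriv ℝ j (u i) x (fun _ => x) = 0) ∧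
  (∀ i, ∃ x ∈ Metric.closedBall (0 : EuclideanSpace ℝ (Fin n)) 1, u i x ≠ 0) ∧
  (∀ i, (∫ x in Metric.ball (0 : EuclideanSpace ℝ (Fin n)) 1, |u i x| ^ twoStar n k)
      ≤ M ^ twoStar n k)

def CLocConv {n : ℕ} (m : ℕ) (S : Set (EuclideanSpace ℝ (Fin n)))
    (f : ℕ → EuclideanSpace ℝ (Fin n) → ℝ) (g : EuclideanSpace ℝ (Fin n) → ℝ) : Prop :=
  ∀ K : Set (EuclideanSpace ℝ (Fin n)), K ⊆ S → IsCompact K → ∀ j ≤ m,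
    Filter.Tendsto
      (fun i => ⨆ x : K, ‖iteratedFDeriv ℝ j (f i) (x : EuclideanSpace ℝ (Fin n))
        - iteratedFDeriv ℝ j g (x : EuclideanSpace ℝ (Fin n))‖)
      Filter.atTop (nhds 0)

def Concentration (n k : ℕ) (u : ℕ → EuclideanSpace ℝ (Fin n) → ℝ)
    (ν : ℕ → ℝ) (ε₀ : ℝ) : Prop :=
  (∀ i, 0 < ν i) ∧ Filter.Tendsto ν Filter.atTop (nhds 0) ∧ (ε₀ = 1 ∨ ε₀ = -1) ∧
  CLocConv (2 * k) {(0 : EuclideanSpace ℝ (Fin n))}ᶜ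
    (fun i z => (ν i) ^ (((n : ℝ) - 2 * k) / 2) * u i ((ν i) • z))
    (fun z => ε₀ * Ubub n k z) ∧
  Filter.Tendsto (fun R : ℝ => Filter.limsup (fun i =>
      ⨆ x : {x : EuclideanSpace ℝ (Fin n) //
        x ∈ Metric.ball (0 : EuclideanSpace ℝ (Fin n)) 1 ∧ R * ν i ≤ ‖x‖},
        ‖(x : EuclideanSpace ℝ (Fin n))‖ ^ (((n : ℝ) - 2 * k) / 2)
          * |u i (x : EuclideanSpace ℝ (Fin n))|) Filter.atTop)
    Filter.atTop (nhds 0)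

def Tfun (n k : ℕ) (u : EuclideanSpace ℝ (Fin n) → ℝ) (x : EuclideanSpace ℝ (Fin n)) : ℝ :=
  (((n : ℝ) - 2 * k) / 2) * u x + fderiv ℝ u x x

def ndS {n : ℕ} (u : EuclideanSpace ℝ (Fin n) → ℝ) (x : EuclideanSpace ℝ (Fin n)) : ℝ :=
  fderiv ℝ u x (‖x‖⁻¹ • x)

def halfLapSq {n : ℕ} (k : ℕ) (u : EuclideanSpace ℝ (Fin n) → ℝ)
    (x : EuclideanSpace ℝ (Fin n)) : ℝ :=
  if k % 2 = 0 then (iterLap (k / 2) u x) ^ 2 else ‖gradient (iterLap (k / 2) u) x‖ ^ 2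

def Sfun (n k : ℕ) (u : EuclideanSpace ℝ (Fin n) → ℝ) (x : EuclideanSpace ℝ (Fin n)) : ℝ :=
  (∑ i ∈ Finset.range (k / 2),
    (-(ndS (iterLap (k - i - 1) u) x) * iterLap i (Tfun n k u) x
      + iterLap (k - i - 1) u x * ndS (iterLap i (Tfun n k u)) x))
  - (if k % 2 = 1 then ndS (iterLap (k / 2) u) x * iterLap (k / 2) (Tfun n k u) x else 0)

def sphVol (n : ℕ) : ℝ :=
  (μH[(n : ℝ) - 1] (Metric.sphere (0 : EuclideanSpace ℝ (Fin n)) 1)).toReal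

def Cnk (n k : ℕ) : ℝ :=
  1 / (((n : ℝ) - 2) * sphVol n *
    ∏ i ∈ Finset.Icc 1 (k - 1), (((n : ℝ) - 2 * k + 2 * ((i : ℝ) - 1)) * (2 * (k : ℝ) - 2 * (i : ℝ))))

/-! ### Oscillation -/

/-- `Alt f b N a s`: there are `N` points `a < x₁ < ⋯ < x_N < b` at which `f` takes nonzero values
of alternating sign, the value at the first one having the sign of `s`. -/
def Alt (f : ℝ → ℝ) (b : ℝ) : ℕ → ℝ → ℝ → Prop
  | 0, _, _ => True
  | N + 1, a, s => ∃ x, a < x ∧ x < b ∧ 0 < s * f x ∧ Alt f b N x (-s)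

/-- The weights of the factorisation of `Δ^k` on radial functions into `2k` first order
operators: with `d = n - 1`, the chain `w₀ = u`, `w₁ = r^d u'`, `w₂ = r^(-d) w₁' = Δu`, … satisfies
`w_j' = wt d j · w_(j+1)`. -/
def wt (d j : ℕ) (r : ℝ) : ℝ := if Even j then (r ^ d)⁻¹ else r ^ d

lemma wt_even {d j : ℕ} (h : Even j) (r : ℝ) : wt d j r = (r ^ d)⁻¹ := by simp [wt, h]

lemma wt_odd {d j : ℕ} (h : ¬ Even j) (r : ℝ) : wt d j r = r ^ d := by simp [wt, h]

lemma wt_pos (d j : ℕ) {r : ℝ} (hr : 0 < r) : 0 < wt d j r := by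
  unfold wt; split_ifs <;> positivity

lemma wt_mul_succ (d j : ℕ) {r : ℝ} (hr : 0 < r) : wt d j r * wt d (j + 1) r = 1 := by
  have : r ^ d ≠ 0 := by positivity
  by_cases h : Even j
  · rw [wt_even h, wt_odd (by grind), inv_mul_cancel₀ this]
  · rw [wt_odd h, wt_even (by grind), mul_inv_cancel₀ this]

lemma wt_add_two (d j : ℕ) (r : ℝ) : wt d (j + 2) r = wt d j r := by
  unfold wt; simp [Nat.even_add]

/-- A radial chain of length `m`: functions `w₀, …, w_m` on `[0,1]` with
`w_j' = wt d j · w_(j+1)` in `(0,1)` and with the odd ones vanishing at the origin. -/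
structure Chain (d m : ℕ) (W : ℕ → ℝ → ℝ) : Prop where
  cont : ∀ j < m, ContinuousOn (W j) (Set.Icc 0 1)
  deriv : ∀ j < m, ∀ r ∈ Set.Ioo (0 : ℝ) 1, HasDerivAt (W j) (wt d j r * W (j + 1) r) r
  zero : ∀ j < m, ¬ Even j → W j 0 = 0

lemma Alt.weaken {f : ℝ → ℝ} {b a a' s : ℝ} {N : ℕ} (haa : a ≤ a') (h : Alt f b N a' s) :
    Alt f b N a s := by
  cases N with
  | zero => trivial
  | succ N =>
    obtain ⟨x, h1, h2, h3⟩ := h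
    exact ⟨x, haa.trans_lt h1, h2, h3⟩

lemma Alt.congr_sign {f g : ℝ → ℝ} {b : ℝ} {N : ℕ} :
    ∀ {a s : ℝ}, (∀ x, a < x → x < b → ∀ s, 0 < s * f x → 0 < s * g x) →
      Alt f b N a s → Alt g b N a s := by
  induction N with
  | zero => intros; trivial
  | succ N ih =>
    rintro a s h ⟨x, h1, h2, h3, h4⟩
    exact ⟨x, h1, h2, h x h1 h2 s h3, ih (fun y hy => h y (h1.trans hy)) h4⟩

lemma Alt.of_le {f : ℝ → ℝ} {b : ℝ} {N : ℕ} : ∀ {M : ℕ} {a s : ℝ}, M ≤ N →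
    Alt f b N a s → Alt f b M a s := by
  induction N with
  | zero => intro M a s h _; obtain rfl : M = 0 := by omega
            trivial
  | succ N ih =>
    rintro M a s h ⟨x, h1, h2, h3, h4⟩
    cases M with
    | zero => trivial
    | succ M => exact ⟨x, h1, h2, h3, ih (by omega) h4⟩

/-- Mean value theorem in signed form. -/
lemma mvt_sign {f f' : ℝ → ℝ} {a b s : ℝ} (hab : a < b) (hc : ContinuousOn f (Set.Icc a b))
    (hd : ∀ x ∈ Set.Ioo a b, HasDerivAt f (f' x) x) (h : s * f a < s * f b) :
    ∃ y, a < y ∧ y < b ∧ 0 < s * f' y := by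
  obtain ⟨c, hc1, hc2⟩ := exists_hasDerivAt_eq_slope f f' hab hc hd
  refine ⟨c, hc1.1, hc1.2, ?_⟩
  rw [hc2, ← mul_div_assoc, mul_sub]
  exact div_pos (by linarith) (by linarith)

/-- Rolle: the sign changes of `f` after a point `a` where `f` has (weakly) the opposite sign
are inherited by the derivative. -/
lemma Alt.rolle {f f' : ℝ → ℝ} {b : ℝ} {N : ℕ} : ∀ {a s : ℝ}, ContinuousOn f (Set.Icc a b) →
    (∀ x ∈ Set.Ioo a b, HasDerivAt f (f' x) x) → s * f a ≤ 0 → Alt f b N a s →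
    Alt f' b N a s := by
  induction N with
  | zero => intros; trivial
  | succ N ih =>
    rintro a s hc hd hs ⟨x, h1, h2, h3, h4⟩
    obtain ⟨y, hy1, hy2, hy3⟩ := mvt_sign (s := s) h1
      (hc.mono (Set.Icc_subset_Icc_right h2.le))
      (fun z hz => hd z ⟨hz.1, hz.2.trans h2⟩) (by linarith)
    refine ⟨y, hy1, hy2.trans h2, hy3, Alt.weaken hy2.le ?_⟩
    exact ih (hc.mono (Set.Icc_subset_Icc_left h1.le)) (fun z hz => hd z ⟨h1.trans hz.1, hz.2⟩)
      (by linarith) h4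

/-- Rolle when in addition `f` vanishes at the right endpoint: one more sign change. -/
lemma Alt.rolle_right {f f' : ℝ → ℝ} {b : ℝ} (hb : f b = 0) {N : ℕ} :
    ∀ {a s : ℝ}, a < b → ContinuousOn f (Set.Icc a b) →
    (∀ x ∈ Set.Ioo a b, HasDerivAt f (f' x) x) → s * f a < 0 → Alt f b N a s →
    Alt f' b (N + 1) a s := by
  induction N with
  | zero =>
    intro a s hab hc hd hs _
    obtain ⟨y, hy1, hy2, hy3⟩ := mvt_sign (s := s) hab hc hd (by rw [hb]; linarith)
    exact ⟨y, hy1, hy2, hy3, trivial⟩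
  | succ N ih =>
    rintro a s hab hc hd hs ⟨x, h1, h2, h3, h4⟩
    obtain ⟨y, hy1, hy2, hy3⟩ := mvt_sign (s := s) h1
      (hc.mono (Set.Icc_subset_Icc_right h2.le))
      (fun z hz => hd z ⟨hz.1, hz.2.trans h2⟩) (by linarith)
    refine ⟨y, hy1, hy2.trans h2, hy3, Alt.weaken hy2.le ?_⟩
    exact ih h2 (hc.mono (Set.Icc_subset_Icc_left h1.le))
      (fun z hz => hd z ⟨h1.trans hz.1, hz.2⟩) (by linarith) h4

/-- The four versions of Rolle's theorem, according to whether `f` vanishes at the endpoints.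
No condition at `a` costs one point; a zero at `b` gains one. -/
lemma Alt.rolle_all {f f' : ℝ → ℝ} {a b s : ℝ} {N : ℕ} (hc : ContinuousOn f (Set.Icc a b))
    (hd : ∀ x ∈ Set.Ioo a b, HasDerivAt f (f' x) x) (h : Alt f b (N + 1) a s) :
    (∃ s', Alt f' b N a s') ∧ (f b = 0 → ∃ s', Alt f' b (N + 1) a s') ∧
    (f a = 0 → ∃ s', Alt f' b (N + 1) a s') ∧
    (f a = 0 → f b = 0 → ∃ s', Alt f' b (N + 2) a s') := by
  have h' := h
  obtain ⟨x, h1, h2, h3, h4⟩ := h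
  have hc' := hc.mono (Set.Icc_subset_Icc_left h1.le)
  have hd' : ∀ z ∈ Set.Ioo x b, HasDerivAt f (f' z) z := fun z hz => hd z ⟨h1.trans hz.1, hz.2⟩
  refine ⟨⟨-s, ?_⟩, fun hb => ⟨-s, ?_⟩, fun ha => ⟨s, ?_⟩, fun ha hb => ⟨s, ?_⟩⟩
  · exact (Alt.rolle hc' hd' (by linarith) h4).weaken h1.le
  · exact (Alt.rolle_right hb h2 hc' hd' (by linarith) h4).weaken h1.le
  · exact Alt.rolle hc hd (by simp [ha]) h'
  · obtain ⟨y, hy1, hy2, hy3⟩ := mvt_sign (s := s) h1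
      (hc.mono (Set.Icc_subset_Icc_right h2.le))
      (fun z hz => hd z ⟨hz.1, hz.2.trans h2⟩) (by rw [ha]; linarith)
    exact ⟨y, hy1, hy2.trans h2, hy3,
      (Alt.rolle_right hb h2 hc' hd' (by linarith) h4).weaken hy2.le⟩

lemma Alt.of_wt {d j : ℕ} {g : ℝ → ℝ} {b a s : ℝ} {N : ℕ} (ha : 0 ≤ a)
    (h : Alt (fun r => wt d j r * g r) b N a s) : Alt g b N a s := by
  refine h.congr_sign fun x hx _ s hs => ?_
  have := wt_pos d j (ha.trans_lt hx)
  have h2 : 0 < wt d j x * (s * g x) := by linarith [mul_left_comm s (wt d j x) (g x)]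
  exact (pos_iff_pos_of_mul_pos h2).1 this

/-- If a chain satisfies the `k + 1` conditions `w₀(1) = ⋯ = w_k(1) = 0`, then `w_(2k)` has one
sign change more than `w₀`: passing from `w_j` to `w_(j+1)` loses one for even `j`, and regains
one for each zero at `0` (`j` odd) and each zero at `1` (`j ≤ k`). -/
lemma Chain.alt_gain {d k : ℕ} {W : ℕ → ℝ → ℝ} (hk : 1 ≤ k) (hW : Chain d (2 * k) W)
    (h1 : ∀ j ≤ k, W j 1 = 0) {N : ℕ} (h : ∃ s, Alt (W 0) 1 (N + 1) 0 s) :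
    ∃ s, Alt (W (2 * k)) 1 (N + 2) 0 s := by
  have key : ∀ j ≤ 2 * k, ∃ s, Alt (W j) 1 (N + 1 + min j (k + 1) - (j + 1) / 2) 0 s := by
    intro j
    induction j with
    | zero => intro _; simpa using h
    | succ j ih =>
      intro hj
      obtain ⟨s, hs⟩ := ih (by omega)
      obtain ⟨m, hm⟩ : ∃ m, N + 1 + min j (k + 1) - (j + 1) / 2 = m + 1 :=
        ⟨N + min j (k + 1) - (j + 1) / 2, by omega⟩
      rw [hm] at hs
      obtain ⟨r1, r2, r3, r4⟩ := Alt.rolle_all (hW.cont j (by omega)) (hW.deriv j (by omega)) hs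
      have fin : ∀ M, N + 1 + min (j + 1) (k + 1) - (j + 1 + 1) / 2 ≤ M →
          (∃ s', Alt (fun r => wt d j r * W (j + 1) r) 1 M 0 s') →
          ∃ s, Alt (W (j + 1)) 1 (N + 1 + min (j + 1) (k + 1) - (j + 1 + 1) / 2) 0 s := by
        rintro M hM ⟨s', h'⟩
        exact ⟨s', (h'.of_wt le_rfl).of_le hM⟩
      by_cases he : Even j
      · have he' := he
        rw [Nat.even_iff] at he'
        by_cases hjk : j ≤ k
        · exact fin _ (by omega) (r2 (h1 j hjk))
        · exact fin _ (by omega) r1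
      · have h0 := hW.zero j (by omega) he
        rw [Nat.even_iff] at he
        by_cases hjk : j ≤ k
        · exact fin _ (by omega) (r4 h0 (h1 j hjk))
        · exact fin _ (by omega) (r3 h0)
  have := key (2 * k) le_rfl
  rwa [show N + 1 + min (2 * k) (k + 1) - (2 * k + 1) / 2 = N + 2 by omega] at this

lemma Alt.split {f : ℝ → ℝ} {b : ℝ} {N : ℕ} (L : ℕ) : ∀ {a s : ℝ}, Alt f b (L + 1 + N) a s →
    ∃ c s', a < c ∧ c < b ∧ Alt f c L a s ∧ Alt f b N c s' := by
  induction L with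
  | zero =>
    intro a s h
    rw [show 0 + 1 + N = N + 1 by omega] at h
    obtain ⟨x, h1, h2, _, h4⟩ := h
    exact ⟨x, -s, h1, h2, trivial, h4⟩
  | succ L ih =>
    intro a s h
    rw [show L + 1 + 1 + N = (L + 1 + N) + 1 by omega] at h
    obtain ⟨x, h1, _, h3, h4⟩ := h
    obtain ⟨c, s', e1, e2, e3, e4⟩ := ih h4
    exact ⟨c, s', h1.trans e1, e2, ⟨x, h1, e1, h3, e3⟩, e4⟩

/-- Pigeonhole: many sign changes force `L` of them within a short interval. -/
lemma Alt.short {f : ℝ → ℝ} {b δ : ℝ} (L m : ℕ) : ∀ {a s : ℝ}, a ≤ b →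
    Alt f b (m * (L + 1)) a s →
    (∃ a' b' s', a ≤ a' ∧ a' < b' ∧ b' ≤ b ∧ b' - a' ≤ δ ∧ Alt f b' L a' s') ∨ m * δ ≤ b - a := by
  induction m with
  | zero => intro a s hab _; right; simpa using hab
  | succ m ih =>
    intro a s hab h
    rw [show (m + 1) * (L + 1) = L + 1 + m * (L + 1) by ring] at h
    obtain ⟨c, s', e1, e2, e3, e4⟩ := h.split L
    by_cases hc : c - a ≤ δ
    · exact Or.inl ⟨a, c, s, le_rfl, e1, e2.le, hc, e3⟩
    · rcases ih e2.le e4 with ⟨a', b', t, f1, f2, f3, f4, f5⟩ | h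
      · exact Or.inl ⟨a', b', t, e1.le.trans f1, f2, f3, f4, f5⟩
      · right; push_cast; linarith

/-- A Lipschitz estimate from the mean value theorem; no differentiability at the endpoints. -/
lemma mvt_bound {f f' : ℝ → ℝ} {a b C x y : ℝ} (hc : ContinuousOn f (Set.Icc a b))
    (hd : ∀ x ∈ Set.Ioo a b, HasDerivAt f (f' x) x) (hC : ∀ x ∈ Set.Ioo a b, |f' x| ≤ C)
    (hx : x ∈ Set.Icc a b) (hy : y ∈ Set.Icc a b) : |f x - f y| ≤ C * |x - y| := by
  have main : ∀ x y, x ∈ Set.Icc a b → y ∈ Set.Icc a b → x < y → |f x - f y| ≤ C * |x - y| := by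
    intro x y hx hy hxy
    obtain ⟨c, hc1, hc2⟩ := exists_hasDerivAt_eq_slope f f' hxy
      (hc.mono (Set.Icc_subset_Icc hx.1 hy.2))
      (fun z hz => hd z ⟨hx.1.trans_lt hz.1, hz.2.trans_le hy.2⟩)
    have h := hC c ⟨hx.1.trans_lt hc1.1, hc1.2.trans_le hy.2⟩
    have hne : y - x ≠ 0 := (sub_pos.2 hxy).ne'
    rw [eq_div_iff hne] at hc2
    rw [abs_sub_comm, ← hc2, abs_mul, abs_sub_comm x y]
    exact mul_le_mul_of_nonneg_right h (abs_nonneg _)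
  rcases lt_trichotomy x y with h | h | h
  · exact main x y hx hy h
  · simp [h]
  · rw [abs_sub_comm, abs_sub_comm x]; exact main y x hy hx h

/-- Two steps of a chain on an interval `[a,b]` where both functions vanish somewhere. The
degeneracy of the weight at `0` is harmless if the interval stays away from `0` relative to its
length, or starts at `0` with the odd function vanishing there. -/
lemma two_step {d : ℕ} {A B D : ℝ → ℝ} {a b t s M : ℝ} (ha : 0 ≤ a)
    (hcase : 0 < a ∧ b ≤ 2 * a ∨ a = 0 ∧ s = 0)
    (hA : ContinuousOn A (Set.Icc a b)) (hB : ContinuousOn B (Set.Icc a b))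
    (hA' : ∀ r ∈ Set.Ioo a b, HasDerivAt A ((r ^ d)⁻¹ * B r) r)
    (hB' : ∀ r ∈ Set.Ioo a b, HasDerivAt B (r ^ d * D r) r)
    (ht : t ∈ Set.Icc a b) (hs : s ∈ Set.Icc a b) (hAt : A t = 0) (hBs : B s = 0)
    (hM : 0 ≤ M) (hD : ∀ r ∈ Set.Ioo a b, |D r| ≤ M) :
    ∀ r ∈ Set.Icc a b, |A r| ≤ 2 ^ d * (b - a) ^ 2 * M := by
  have hab : a ≤ b := ht.1.trans ht.2
  have hBd : ∀ r ∈ Set.Ioo a b, |(r ^ d)⁻¹ * B r| ≤ 2 ^ d * (b - a) * M := by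
    intro r hr
    have hr0 : 0 < r := ha.trans_lt hr.1
    rw [abs_mul, abs_inv, abs_of_pos (pow_pos hr0 d), inv_mul_le_iff₀ (pow_pos hr0 d)]
    rcases hcase with ⟨ha0, hb2⟩ | ⟨rfl, rfl⟩
    · have h1 := mvt_bound (C := b ^ d * M) hB hB' (fun x hx => by
        rw [abs_mul, abs_of_nonneg (pow_nonneg (ha.trans hx.1.le) d)]
        exact mul_le_mul (pow_le_pow_left₀ (ha.trans hx.1.le) hx.2.le d) (hD x hx) (abs_nonneg _)
          (pow_nonneg (ha.trans hab) d)) ⟨hr.1.le, hr.2.le⟩ hs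
      rw [hBs, sub_zero] at h1
      have h2 : |r - s| ≤ b - a := by
        rw [abs_le]; constructor <;> linarith [hr.1, hr.2, hs.1, hs.2]
      have h3 : b ^ d ≤ 2 ^ d * r ^ d := by
        rw [← mul_pow]; exact pow_le_pow_left₀ (ha.trans hab) (by linarith [hr.1]) d
      calc |B r| ≤ b ^ d * M * |r - s| := h1
        _ ≤ (2 ^ d * r ^ d) * M * (b - a) := by gcongr
        _ = _ := by ring
    · have h1 := mvt_bound (a := 0) (b := r) (C := r ^ d * M)
        (hB.mono (Set.Icc_subset_Icc_right hr.2.le))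
        (fun x hx => hB' x ⟨hx.1, hx.2.trans hr.2⟩) (fun x hx => by
        rw [abs_mul, abs_of_nonneg (pow_nonneg hx.1.le d)]
        exact mul_le_mul (pow_le_pow_left₀ hx.1.le hx.2.le d) (hD x ⟨hx.1, hx.2.trans hr.2⟩)
          (abs_nonneg _) (pow_nonneg hr0.le d)) (x := r) (y := 0) ⟨hr0.le, le_rfl⟩ ⟨le_rfl, hr0.le⟩
      rw [hBs, sub_zero, sub_zero, abs_of_pos hr0] at h1
      have h2 : (1 : ℝ) ≤ 2 ^ d := one_le_pow₀ (by norm_num)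
      calc |B r| ≤ r ^ d * M * r := h1
        _ ≤ r ^ d * M * (1 * b) := by
          rw [one_mul]; exact mul_le_mul_of_nonneg_left hr.2.le (by positivity)
        _ ≤ r ^ d * M * (2 ^ d * b) := by
          have : 0 ≤ b := hab
          gcongr
        _ = _ := by ring
  intro r hr
  have h1 := mvt_bound hA hA' hBd hr ht
  rw [hAt, sub_zero] at h1
  have h2 : |r - t| ≤ b - a := by
    rw [abs_le]; constructor <;> linarith [hr.1, hr.2, ht.1, ht.2]
  have : 0 ≤ b - a := by linarith
  calc |A r| ≤ 2 ^ d * (b - a) * M * |r - t| := h1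
    _ ≤ 2 ^ d * (b - a) * M * (b - a) := by gcongr
    _ = _ := by ring

/-- On a short interval on which every function of the chain has a zero, `w₀` vanishes. -/
lemma Chain.vanish {d k : ℕ} {W : ℕ → ℝ → ℝ} {K a b : ℝ} (hk : 1 ≤ k) (hW : Chain d (2 * k) W)
    (hK : 0 ≤ K) (hV : ∀ r ∈ Set.Ioo (0 : ℝ) 1, |W (2 * k) r| ≤ K * |W 0 r|)
    (ha : 0 ≤ a) (hab : a ≤ b) (hb : b ≤ 1)
    (hcase : 0 < a ∧ b ≤ 2 * a ∨ a = 0)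
    (hz : ∀ j < 2 * k, ∃ t ∈ Set.Icc a b, W j t = 0)
    (h1 : 2 ^ d * (b - a) ^ 2 ≤ 1) (h2 : 2 ^ d * (b - a) ^ 2 * K < 1) :
    ∀ r ∈ Set.Icc a b, W 0 r = 0 := by
  have hsub : Set.Icc a b ⊆ Set.Icc 0 1 := Set.Icc_subset_Icc ha hb
  have hsub' : Set.Ioo a b ⊆ Set.Ioo 0 1 := Set.Ioo_subset_Ioo ha hb
  obtain ⟨p, hp, hmax⟩ := isCompact_Icc.exists_isMaxOn (Set.nonempty_Icc.2 hab)
    ((hW.cont 0 (by omega)).mono hsub).abs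
  set m := |W 0 p| with hm
  have hmax' : ∀ r ∈ Set.Icc a b, |W 0 r| ≤ m := fun r hr => hmax hr
  set q := 2 ^ d * (b - a) ^ 2 with hq
  have hq0 : 0 ≤ q := by positivity
  have hm0 : 0 ≤ m := abs_nonneg _
  -- one double step
  have step : ∀ i < k, ∀ M, 0 ≤ M → (∀ r ∈ Set.Ioo a b, |W (2 * i + 2) r| ≤ M) →
      ∀ r ∈ Set.Icc a b, |W (2 * i) r| ≤ q * M := by
    intro i hi M hM hD
    obtain ⟨t, ht, ht0⟩ := hz (2 * i) (by omega)
    obtain ⟨s, hs, hs0, hcase'⟩ : ∃ s ∈ Set.Icc a b, W (2 * i + 1) s = 0 ∧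
        (0 < a ∧ b ≤ 2 * a ∨ a = 0 ∧ s = 0) := by
      rcases hcase with h | rfl
      · obtain ⟨s, hs, hs0⟩ := hz (2 * i + 1) (by omega)
        exact ⟨s, hs, hs0, Or.inl h⟩
      · exact ⟨0, ⟨le_rfl, hab⟩, hW.zero _ (by omega) (by grind), Or.inr ⟨rfl, rfl⟩⟩
    refine two_step ha hcase' ((hW.cont _ (by omega)).mono hsub) ((hW.cont _ (by omega)).mono hsub)
      (fun r hr => ?_) (fun r hr => ?_) ht hs ht0 hs0 hM hD
    · have := hW.deriv (2 * i) (by omega) r (hsub' hr)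
      rwa [wt_even (by grind)] at this
    · have := hW.deriv (2 * i + 1) (by omega) r (hsub' hr)
      rwa [wt_odd (by grind)] at this
  have top : ∀ r ∈ Set.Ioo a b, |W (2 * k) r| ≤ K * m := fun r hr =>
    (hV r (hsub' hr)).trans (mul_le_mul_of_nonneg_left (hmax' r (Set.Ioo_subset_Icc_self hr)) hK)
  have all : ∀ l, l + 1 ≤ k → ∀ r ∈ Set.Icc a b, |W (2 * (k - 1 - l)) r| ≤ q * (K * m) := by
    intro l
    induction l with
    | zero =>
      intro hl
      refine step (k - 1 - 0) (by omega) (K * m) (by positivity) ?_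
      rwa [show 2 * (k - 1 - 0) + 2 = 2 * k by omega]
    | succ l ih =>
      intro hl r hr
      refine (step (k - 1 - (l + 1)) (by omega) (q * (K * m)) (by positivity) ?_ r hr).trans ?_
      · rw [show 2 * (k - 1 - (l + 1)) + 2 = 2 * (k - 1 - l) by omega]
        exact fun r hr => ih (by omega) r (Set.Ioo_subset_Icc_self hr)
      · exact mul_le_of_le_one_left (by positivity) h1
  have h3 := all (k - 1) (by omega) p hp
  rw [show 2 * (k - 1 - (k - 1)) = 0 by omega, ← hm] at h3
  have h4 : m = 0 := by
    by_contra hne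
    have : 0 < m := lt_of_le_of_ne hm0 (Ne.symm hne)
    nlinarith
  intro r hr
  exact abs_nonpos_iff.1 ((hmax' r hr).trans h4.le)

lemma Alt.exists_zero {f : ℝ → ℝ} {a b s : ℝ} {N : ℕ} (hf : ContinuousOn f (Set.Icc a b))
    (h : Alt f b (N + 2) a s) : ∃ t ∈ Set.Icc a b, f t = 0 := by
  obtain ⟨x, h1, h2, h3, y, h4, h5, h6, _⟩ := h
  have hcont : ContinuousOn (fun r => s * f r) (Set.Icc x y) :=
    continuousOn_const.mul (hf.mono (Set.Icc_subset_Icc h1.le h5.le))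
  obtain ⟨t, ht, ht0⟩ := intermediate_value_Icc' h4.le hcont
    (show (0 : ℝ) ∈ Set.Icc (s * f y) (s * f x) from ⟨by linarith, h3.le⟩)
  have hs : s ≠ 0 := by rintro rfl; simp at h3
  exact ⟨t, ⟨h1.le.trans ht.1, ht.2.trans h5.le⟩, (mul_eq_zero.1 ht0).resolve_left hs⟩

/-- The number of sign changes of `w₀` is bounded if `|w_(2k)| ≤ K |w₀|`. -/
lemma Chain.alt_bdd {d k : ℕ} {W : ℕ → ℝ → ℝ} {K : ℝ} (hk : 1 ≤ k) (hW : Chain d (2 * k) W)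
    (hK : 0 ≤ K) (hV : ∀ r ∈ Set.Ioo (0 : ℝ) 1, |W (2 * k) r| ≤ K * |W 0 r|) :
    ∃ N, ¬ ∃ s, Alt (W 0) 1 N 0 s := by
  -- intervals of length `2δ` satisfy the smallness conditions of `Chain.vanish`
  obtain ⟨δ, hδ, hδ1, hδ2⟩ : ∃ δ : ℝ, 0 < δ ∧ 2 ^ d * (2 * δ) ^ 2 ≤ 1 ∧
      2 ^ d * (2 * δ) ^ 2 * K < 1 := by
    have hc : ContinuousAt (fun δ : ℝ => 2 ^ d * (2 * δ) ^ 2) 0 := by fun_prop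
    have hc2 : ContinuousAt (fun δ : ℝ => 2 ^ d * (2 * δ) ^ 2 * K) 0 := by fun_prop
    have e1 := hc.eventually_lt (continuousAt_const (y := (1 : ℝ))) (by simp)
    have e2 := hc2.eventually_lt (continuousAt_const (y := (1 : ℝ))) (by simp)
    have e3 := ((e1.and e2).filter_mono (nhdsWithin_le_nhds (s := Set.Ioi (0 : ℝ)))).and
      self_mem_nhdsWithin
    obtain ⟨δ, ⟨g1, g2⟩, g3⟩ := e3.exists
    exact ⟨δ, g3, g1.le, g2⟩
  obtain ⟨m, hm⟩ := exists_nat_gt (1 / δ)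
  rw [div_lt_iff₀ hδ] at hm
  refine ⟨m * (2 * k + 1 + 1), ?_⟩
  rintro ⟨s, hs⟩
  rcases Alt.short (δ := δ) (2 * k + 1) m zero_le_one hs with ⟨a, b, s', ha, hab, hb, hδ', h⟩ | h
  swap
  · linarith
  have hsub : Set.Icc a b ⊆ Set.Icc 0 1 := Set.Icc_subset_Icc ha hb
  have hsub' : Set.Ioo a b ⊆ Set.Ioo 0 1 := Set.Ioo_subset_Ioo ha hb
  have alts : ∀ j ≤ 2 * k, ∃ s, Alt (W j) b (2 * k - j + 1) a s := by
    intro j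
    induction j with
    | zero => intro _; exact ⟨s', by simpa using h⟩
    | succ j ih =>
      intro hj
      obtain ⟨s, hs⟩ := ih (by omega)
      obtain ⟨s1, h1⟩ := (Alt.rolle_all ((hW.cont j (by omega)).mono hsub)
        (fun x hx => hW.deriv j (by omega) x (hsub' hx)) hs).1
      rw [show 2 * k - (j + 1) + 1 = 2 * k - j by omega]
      exact ⟨s1, h1.of_wt ha⟩
  have hz : ∀ j < 2 * k, ∃ t ∈ Set.Icc a b, W j t = 0 := by
    intro j hj
    obtain ⟨s, hs⟩ := alts j hj.le
    rw [show 2 * k - j + 1 = (2 * k - j - 1) + 2 by omega] at hs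
    exact hs.exists_zero ((hW.cont j hj).mono hsub)
  have hsq : ∀ x : ℝ, 0 ≤ x → x ≤ 2 * δ → 2 ^ d * x ^ 2 ≤ 2 ^ d * (2 * δ) ^ 2 := by
    intro x h0 hx; gcongr
  have hw : ∀ r ∈ Set.Icc a b, W 0 r = 0 := by
    by_cases hcase : a < δ
    · intro r hr
      have hq := hsq b (by linarith) (by linarith)
      refine Chain.vanish (a := 0) (b := b) hk hW hK hV le_rfl (by linarith) hb (Or.inr rfl)
        (fun j hj => ?_) (by rw [sub_zero]; linarith) ?_ r ⟨by linarith [hr.1], hr.2⟩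
      · obtain ⟨t, ht, h0⟩ := hz j hj
        exact ⟨t, ⟨by linarith [ht.1], ht.2⟩, h0⟩
      · rw [sub_zero]; exact (mul_le_mul_of_nonneg_right hq hK).trans_lt hδ2
    · push Not at hcase
      have hq := hsq (b - a) (by linarith) (by linarith)
      exact Chain.vanish hk hW hK hV ha hab.le hb (Or.inl ⟨by linarith, by linarith⟩) hz
        (by linarith) ((mul_le_mul_of_nonneg_right hq hK).trans_lt hδ2)
  obtain ⟨x, h1, h2, h3, _⟩ := h
  rw [hw x ⟨h1.le, h2.le⟩] at h3
  simp at h3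

/-- A chain with `w_(2k) = V w₀`, `0 ≤ V ≤ K`, and with one boundary condition at `1` too many
is trivial. -/
lemma Chain.eq_zero {d k : ℕ} {W : ℕ → ℝ → ℝ} {V : ℝ → ℝ} {K : ℝ} (hk : 1 ≤ k)
    (hW : Chain d (2 * k) W) (h1 : ∀ j ≤ k, W j 1 = 0)
    (hV : ∀ r ∈ Set.Ioo (0 : ℝ) 1, W (2 * k) r = V r * W 0 r)
    (hV0 : ∀ r ∈ Set.Ioo (0 : ℝ) 1, 0 ≤ V r ∧ V r ≤ K) :
    ∀ j < 2 * k, ∀ r ∈ Set.Icc (0 : ℝ) 1, W j r = 0 := by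
  have hK : 0 ≤ K := by
    have := hV0 (1 / 2) (by norm_num)
    linarith
  obtain ⟨N, hN⟩ := hW.alt_bdd hk hK (fun r hr => by
    rw [hV r hr, abs_mul, abs_of_nonneg (hV0 r hr).1]
    exact mul_le_mul_of_nonneg_right (hV0 r hr).2 (abs_nonneg _))
  have h0 : ∀ r ∈ Set.Ioo (0 : ℝ) 1, W 0 r = 0 := by
    intro r hr
    by_contra hne
    have all : ∀ N, ∃ s, Alt (W 0) 1 (N + 1) 0 s := by
      intro N
      induction N with
      | zero => exact ⟨W 0 r, r, hr.1, hr.2, mul_self_pos.2 hne, trivial⟩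
      | succ N ih =>
        obtain ⟨s, hs⟩ := hW.alt_gain hk h1 ih
        refine ⟨s, hs.congr_sign fun x hx hx1 s h => ?_⟩
        have hx' : x ∈ Set.Ioo (0 : ℝ) 1 := ⟨hx, hx1⟩
        rw [hV x hx'] at h
        have h2 : 0 < V x * (s * W 0 x) := by linarith [mul_left_comm s (V x) (W 0 x)]
        exact pos_of_mul_pos_right h2 (hV0 x hx').1
    obtain ⟨s, hs⟩ := all N
    exact hN ⟨s, hs.of_le (by omega)⟩
  have hj : ∀ j < 2 * k, ∀ r ∈ Set.Ioo (0 : ℝ) 1, W j r = 0 := by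
    intro j
    induction j with
    | zero => exact fun _ => h0
    | succ j ih =>
      intro hj r hr
      have hd := hW.deriv j (by omega) r hr
      have hd2 : HasDerivAt (W j) 0 r :=
        (hasDerivAt_const r (0 : ℝ)).congr_of_eventuallyEq
          (Filter.mem_of_superset (Ioo_mem_nhds hr.1 hr.2) (fun x hx => ih (by omega) x hx))
      exact (mul_eq_zero.1 (hd.unique hd2)).resolve_left (wt_pos d j hr.1).ne'
  intro j hj' r hr
  have hcl : closure (Set.Ioo (0 : ℝ) 1) = Set.Icc 0 1 := closure_Ioo (by norm_num)
  have : Set.EqOn (W j) (fun _ => 0) (closure (Set.Ioo (0 : ℝ) 1)) :=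
    Set.EqOn.of_subset_closure (s := Set.Ioo 0 1) (fun x hx => hj j hj' x hx)
      (by rw [hcl]; exact hW.cont j hj') continuousOn_const subset_closure le_rfl
  exact this (hcl ▸ hr)

/-! ### The Pohozaev identity -/

/-- The function `t ↦ |t|^q t` is differentiable when `q > 0`. -/
lemma hasDerivAt_abs_rpow_mul {q : ℝ} (hq : 0 < q) (t : ℝ) :
    HasDerivAt (fun t : ℝ => |t| ^ q * t) ((q + 1) * |t| ^ q) t := by
  rcases lt_trichotomy t 0 with h | h | h
  · have h1 : HasDerivAt (fun t : ℝ => -(-t) ^ (q + 1)) ((q + 1) * (-t) ^ q) t := by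
      have := ((hasDerivAt_id t).neg.rpow_const (p := q + 1) (Or.inl (by simp; linarith))).neg
      refine HasDerivAt.congr_deriv this ?_
      simp only [Pi.neg_apply, id, add_sub_cancel_right]
      ring
    rw [abs_of_neg h]
    refine h1.congr_of_eventuallyEq ?_
    filter_upwards [gt_mem_nhds h] with x hx
    have hx' : x < 0 := hx
    rw [abs_of_neg hx', Real.rpow_add_one (by linarith)]
    ring
  · subst h
    rw [abs_zero, Real.zero_rpow hq.ne', mul_zero]
    rw [hasDerivAt_iff_tendsto_slope]
    have hc : Tendsto (fun t : ℝ => |t| ^ q) (𝓝 0) (𝓝 0) := by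
      have : ContinuousAt (fun t : ℝ => |t| ^ q) 0 :=
        (continuous_abs.continuousAt).rpow_const (Or.inr hq.le)
      simpa [ContinuousAt, Real.zero_rpow hq.ne'] using this
    refine (hc.mono_left nhdsWithin_le_nhds).congr' ?_
    filter_upwards [self_mem_nhdsWithin] with x hx
    have hx' : x ≠ 0 := hx
    simp [slope_def_field, hx']
  · have h1 : HasDerivAt (fun t : ℝ => t ^ (q + 1)) ((q + 1) * t ^ q) t := by
      have := (hasDerivAt_id t).rpow_const (p := q + 1) (Or.inl h.ne')
      refine HasDerivAt.congr_deriv this ?_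
      simp
    rw [abs_of_pos h]
    refine h1.congr_of_eventuallyEq ?_
    filter_upwards [lt_mem_nhds h] with x hx
    rw [abs_of_pos hx, Real.rpow_add_one (by linarith)]

lemma hasDerivAt_wt (d j : ℕ) {r : ℝ} (hr : 0 < r) :
    HasDerivAt (wt d j) ((if Even j then -(d : ℝ) else d) * wt d j r / r) r := by
  have h0 : r ≠ 0 := hr.ne'
  have hp : HasDerivAt (fun r : ℝ => r ^ d) (d * r ^ d / r) r := by
    refine HasDerivAt.congr_deriv (hasDerivAt_pow d r) ?_
    rcases d with _ | d
    · simp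
    · field_simp; simp [pow_succ]
  by_cases h : Even j
  · have e : wt d j = fun r => (r ^ d)⁻¹ := funext fun r => wt_even h r
    rw [e, if_pos h]
    refine HasDerivAt.congr_deriv (hp.inv (pow_ne_zero d h0)) ?_
    field_simp
  · have e : wt d j = fun r => r ^ d := funext fun r => wt_odd h r
    rw [e, if_neg h]
    exact hp

/-- The coefficients `c_j` for which `z_j = r w_j' + c_j w_j` is again a chain. -/
def pc (d k j : ℕ) : ℝ := ((d : ℝ) + 1 - 2 * k) / 2 + j - if Even j then 0 else (d : ℝ)

/-- The chain of the function `r u' + (n-2k)/2 u` that generates dilations, expressed through the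
chain of `u`. -/
def pz (d k : ℕ) (W : ℕ → ℝ → ℝ) (j : ℕ) (r : ℝ) : ℝ :=
  r * wt d j r * W (j + 1) r + pc d k j * W j r

lemma pz_deriv {d k m : ℕ} {W : ℕ → ℝ → ℝ} (hW : Chain d (m + 1) W) {j : ℕ} (hj : j < m)
    {r : ℝ} (hr : r ∈ Set.Ioo (0 : ℝ) 1) :
    HasDerivAt (pz d k W j) (wt d j r * pz d k W (j + 1) r) r := by
  have h := (((hasDerivAt_id r).mul (hasDerivAt_wt d j hr.1)).mul
    (hW.deriv (j + 1) (by omega) r hr)).add ((hW.deriv j (by omega) r hr).const_mul (pc d k j))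
  refine HasDerivAt.congr_deriv h ?_
  have h0 : r ≠ 0 := hr.1.ne'
  unfold pz pc
  simp only [id, Pi.mul_apply]
  by_cases he : Even j
  · rw [if_pos he, if_pos he, if_neg (by grind)]
    push_cast
    field_simp
    ring
  · rw [if_neg he, if_neg he, if_pos (by grind)]
    push_cast
    field_simp
    ring

lemma pz_cont {d k m : ℕ} {W : ℕ → ℝ → ℝ} (hW : Chain d (m + 1) W) {j : ℕ} (hj : j < m)
    (hm : Even m) : ContinuousOn (pz d k W j) (Set.Icc 0 1) := by
  refine ContinuousOn.add ?_ (continuousOn_const.mul (hW.cont j (by omega)))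
  by_cases he : Even j
  swap
  · simp only [wt_odd he]
    exact (by fun_prop : Continuous fun r : ℝ => r * r ^ d).continuousOn.mul
      (hW.cont (j + 1) (by omega))
  simp only [wt_even he]
  have hodd : ¬ Even (j + 1) := by grind
  have hjm : j + 2 ≤ m := by
    rcases hm with ⟨a, ha⟩; rcases he with ⟨b, hb⟩; omega
  obtain ⟨M, hM⟩ := isCompact_Icc.exists_bound_of_continuousOn (hW.cont (j + 2) (by omega))
  intro r hr
  rcases hr.1.eq_or_lt with h0 | h0
  swap
  · refine ContinuousWithinAt.mul (ContinuousAt.continuousWithinAt ?_) (hW.cont (j + 1) (by omega) r hr)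
    exact continuousAt_id.mul ((continuousAt_pow r d).inv₀ (pow_ne_zero d h0.ne'))
  subst h0
  -- at the origin the odd function is `O(r^(d+1))`
  have hbd : ∀ r ∈ Set.Icc (0 : ℝ) 1, |r * (r ^ d)⁻¹ * W (j + 1) r| ≤ r ^ 2 * M := by
    intro r hr
    rcases hr.1.eq_or_lt with h0 | h0
    · subst h0; simp
    have h1 := mvt_bound (a := 0) (b := r) (C := r ^ d * M)
      ((hW.cont (j + 1) (by omega)).mono (Set.Icc_subset_Icc_right hr.2))
      (fun x hx => hW.deriv (j + 1) (by omega) x ⟨hx.1, hx.2.trans_le hr.2⟩) (fun x hx => by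
      rw [wt_odd hodd, abs_mul, abs_of_nonneg (pow_nonneg hx.1.le d)]
      exact mul_le_mul (pow_le_pow_left₀ hx.1.le hx.2.le d)
        (hM x ⟨hx.1.le, hx.2.le.trans hr.2⟩)
        (abs_nonneg _) (pow_nonneg h0.le d)) (x := r) (y := 0) ⟨h0.le, le_rfl⟩ ⟨le_rfl, h0.le⟩
    rw [hW.zero _ (by omega) hodd, sub_zero, sub_zero, abs_of_pos h0] at h1
    rw [abs_mul, abs_of_nonneg (by positivity)]
    have hp : r ^ d ≠ 0 := by positivity
    calc r * (r ^ d)⁻¹ * |W (j + 1) r| ≤ r * (r ^ d)⁻¹ * (r ^ d * M * r) := by gcongr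
      _ = r ^ 2 * M := by field_simp
  have h0 : (0 : ℝ) * (0 ^ d)⁻¹ * W (j + 1) 0 = 0 := by simp
  rw [ContinuousWithinAt, h0]
  refine squeeze_zero_norm' (a := fun r => r ^ 2 * M) ?_ ?_
  · filter_upwards [self_mem_nhdsWithin] with r hr
    exact hbd r hr
  · have : Continuous fun r : ℝ => r ^ 2 * M := by fun_prop
    have h := (this.tendsto 0).mono_left (nhdsWithin_le_nhds (s := Set.Icc 0 1))
    simpa using h

/-- The Pohozaev function, whose derivative is computed in `poho_deriv`. -/
def poho (d k : ℕ) (q : ℝ) (W : ℕ → ℝ → ℝ) (r : ℝ) : ℝ :=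
  ∑ j ∈ Finset.range (2 * k), (-1) ^ j * (pz d k W j r * W (2 * k - 1 - j) r)
    + q / (q + 2) * (r ^ (d + 1) * |W 0 r| ^ (q + 2))

/-- The Pohozaev identity in differential form. The sum telescopes to
`r^d (z₀ w_(2k) - z_(2k) w₀)`; criticality of `q`, i.e. `q n = 2k (q + 2)`, cancels the
nonlinear terms. -/
lemma poho_deriv {d k : ℕ} {W : ℕ → ℝ → ℝ} {lam q : ℝ} (hk : 1 ≤ k) (hq : 0 < q)
    (hqd : q * (d + 1) = 2 * k * (q + 2)) (hW : Chain d (2 * k + 1) W) {r : ℝ}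
    (hr : r ∈ Set.Ioo (0 : ℝ) 1)
    (h1 : W (2 * k) r = (lam + |W 0 r| ^ q) * W 0 r)
    (h2 : W (2 * k + 1) r = (lam + (q + 1) * |W 0 r| ^ q) * W 1 r) :
    HasDerivAt (poho d k q W) (-(2 * k * lam * r ^ d * W 0 r ^ 2)) r := by
  have hr0 : r ≠ 0 := hr.1.ne'
  have hrd : r ^ d ≠ 0 := pow_ne_zero d hr0
  have hsum : HasDerivAt (fun r => ∑ j ∈ Finset.range (2 * k),
      (-1) ^ j * (pz d k W j r * W (2 * k - 1 - j) r))
      (r ^ d * (pz d k W 0 r * W (2 * k) r - pz d k W (2 * k) r * W 0 r)) r := by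
    let T : ℕ → ℝ := fun j => (-1) ^ j * (pz d k W j r * (wt d (j + 1) r * W (2 * k - j) r))
    have : HasDerivAt (fun r => ∑ j ∈ Finset.range (2 * k),
        (-1) ^ j * (pz d k W j r * W (2 * k - 1 - j) r))
        (∑ j ∈ Finset.range (2 * k), (T j - T (j + 1))) r := by
      refine HasDerivAt.fun_sum fun j hj => ?_
      have hj' := Finset.mem_range.1 hj
      have h := ((pz_deriv (k := k) hW hj' hr).mul
        (hW.deriv (2 * k - 1 - j) (by omega) r hr)).const_mul ((-1 : ℝ) ^ j)
      refine HasDerivAt.congr_deriv h ?_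
      have hw : wt d (2 * k - 1 - j) r = wt d (j + 1) r := by
        by_cases he : Even j
        · rw [wt_odd (by grind), wt_odd (by grind)]
        · rw [wt_even (by grind), wt_even (by grind)]
      simp only [T]
      rw [hw, show 2 * k - 1 - j + 1 = 2 * k - j by omega,
        show 2 * k - (j + 1) = 2 * k - 1 - j by omega, show j + 1 + 1 = j + 2 by omega,
        wt_add_two, pow_succ]
      ring
    refine HasDerivAt.congr_deriv this ?_
    rw [Finset.sum_range_sub']
    simp only [T, Nat.sub_zero, Nat.sub_self]
    rw [wt_odd (by grind), wt_odd (by grind), Even.neg_one_pow (n := 2 * k) (by simp)]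
    ring
  have habs : HasDerivAt (fun r => r ^ (d + 1) * |W 0 r| ^ (q + 2))
      ((d + 1) * r ^ d * (|W 0 r| ^ q * W 0 r ^ 2)
        + r ^ (d + 1) * ((q + 2) * |W 0 r| ^ q * W 0 r * ((r ^ d)⁻¹ * W 1 r))) r := by
    have e1 := hasDerivAt_abs_rpow (W 0 r) (p := q + 2) (by linarith)
    have hd0 := hW.deriv 0 (by omega) r hr
    rw [wt_even (by simp)] at hd0
    have e2 := (hasDerivAt_pow (d + 1) r).mul (e1.comp r hd0)
    refine HasDerivAt.congr_deriv e2 ?_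
    have e3 : |W 0 r| ^ (q + 2) = |W 0 r| ^ q * W 0 r ^ 2 := by
      rw [Real.rpow_add_of_nonneg (abs_nonneg _) hq.le (by norm_num)]
      norm_num
    simp only [Function.comp_apply]
    rw [e3]
    simp only [add_sub_cancel_right, Nat.add_sub_cancel, Nat.cast_add, Nat.cast_one, zero_add]
  have h := hsum.add (habs.const_mul (q / (q + 2)))
  refine HasDerivAt.congr_deriv h ?_
  have hq2 : q + 2 ≠ 0 := by linarith
  unfold pz pc
  rw [h1, h2, wt_even (by simp), wt_even (by simp), if_pos (by simp), if_pos (by simp), zero_add]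
  have hqd' : (d : ℝ) = 2 * k * (q + 2) / q - 1 := by field_simp; linarith
  have hq' : q / (q + 2) * (d + 1) = 2 * k := by rw [div_mul_eq_mul_div, hqd]; field_simp
  rw [mul_add (q / (q + 2)), show q / (q + 2) * (((d : ℝ) + 1) * r ^ d * (|W 0 r| ^ q * W 0 r ^ 2))
    = (q / (q + 2) * (d + 1)) * r ^ d * (|W 0 r| ^ q * W 0 r ^ 2) by ring, hq']
  field_simp
  push_cast
  ring

/-- The boundary consequence of the Pohozaev identity: the first derivative not prescribed by the
Dirichlet conditions is of order `√λ`. -/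
lemma Chain.poho_bound {d k : ℕ} {W : ℕ → ℝ → ℝ} {lam q S : ℝ} (hk : 1 ≤ k) (hq : 0 < q)
    (hqd : q * (d + 1) = 2 * k * (q + 2)) (hlam : 0 ≤ lam) (hW : Chain d (2 * k) W)
    (hc : ContinuousOn (W (2 * k)) (Set.Icc 0 1))
    (heq : ∀ r ∈ Set.Ioo (0 : ℝ) 1, W (2 * k) r = (lam + |W 0 r| ^ q) * W 0 r)
    (h1 : ∀ j < k, W j 1 = 0) (hS : ∀ r ∈ Set.Icc (0 : ℝ) 1, |W 0 r| ≤ S) :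
    W k 1 ^ 2 ≤ 2 * k * lam * S ^ 2 := by
  -- the equation allows one more step of the chain
  let X : ℕ → ℝ → ℝ := fun j =>
    if j ≤ 2 * k then W j else fun r => (lam + (q + 1) * |W 0 r| ^ q) * W 1 r
  have hX : ∀ j ≤ 2 * k, X j = W j := fun j hj => if_pos hj
  have hX' : X (2 * k + 1) = fun r => (lam + (q + 1) * |W 0 r| ^ q) * W 1 r := if_neg (by omega)
  have hXc : Chain d (2 * k + 1) X := by
    refine ⟨fun j hj => ?_, fun j hj r hr => ?_, fun j hj ho => ?_⟩
    · rw [hX j (by omega)]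
      rcases Nat.lt_succ_iff_lt_or_eq.1 hj with h | rfl
      · exact hW.cont j h
      · exact hc
    · rw [hX j (by omega)]
      rcases Nat.lt_succ_iff_lt_or_eq.1 hj with h | rfl
      · rw [hX (j + 1) (by omega)]
        exact hW.deriv j h r hr
      · rw [hX', wt_even (by simp)]
        have hd0 := hW.deriv 0 (by omega) r hr
        rw [wt_even (by simp)] at hd0
        have e := (((hasDerivAt_id (W 0 r)).const_mul lam).add
          (hasDerivAt_abs_rpow_mul hq (W 0 r))).comp r hd0
        refine HasDerivAt.congr_of_eventuallyEq (HasDerivAt.congr_deriv e ?_)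
          (Filter.mem_of_superset (Ioo_mem_nhds hr.1 hr.2) (fun x hx => ?_))
        · simp only [zero_add]; ring
        · simp only [Set.mem_ofPred_eq, Function.comp_apply, Pi.add_apply, id, heq x hx]; ring
    · rw [hX j (by omega)]
      rcases Nat.lt_succ_iff_lt_or_eq.1 hj with h | rfl
      · exact hW.zero j h ho
      · simp at ho
  have hX0 : X 0 = W 0 := hX 0 (by omega)
  have hcont : ContinuousOn (poho d k q X) (Set.Icc 0 1) := by
    refine ContinuousOn.add (continuousOn_finsetSum _ fun j hj => ?_) ?_
    · have hj' := Finset.mem_range.1 hj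
      exact continuousOn_const.mul ((pz_cont hXc hj' (by simp)).mul (hXc.cont _ (by omega)))
    · refine continuousOn_const.mul ((continuous_pow _).continuousOn.mul ?_)
      exact (hXc.cont 0 (by omega)).abs.rpow_const (fun _ _ => Or.inr (by linarith))
  have hb := mvt_bound (C := 2 * k * lam * S ^ 2) hcont
    (fun r hr => poho_deriv (lam := lam) hk hq hqd hXc hr
      (by rw [hX _ le_rfl, hX0]; exact heq r hr)
      (by rw [hX', hX0, hX 1 (by omega)])) (fun r hr => by
        have h3 : |X 0 r| ≤ S := by rw [hX0]; exact hS r ⟨hr.1.le, hr.2.le⟩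
        have h4 : r ^ d ≤ 1 := pow_le_one₀ hr.1.le hr.2.le
        have h5 : 0 ≤ r ^ d := pow_nonneg hr.1.le d
        have h6 : X 0 r ^ 2 ≤ S ^ 2 := sq_le_sq' (by linarith [neg_abs_le (X 0 r)])
          ((le_abs_self _).trans h3)
        rw [abs_neg, abs_of_nonneg (by positivity)]
        calc 2 * k * lam * r ^ d * X 0 r ^ 2 ≤ 2 * k * lam * 1 * S ^ 2 := by gcongr
          _ = _ := by ring)
    (x := 1) (y := 0) (by simp) (by simp)
  have hE0 : poho d k q X 0 = 0 := by
    unfold poho pz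
    rw [zero_pow (by omega), zero_mul, mul_zero, add_zero]
    refine Finset.sum_eq_zero fun j hj => ?_
    have hj' := Finset.mem_range.1 hj
    rw [zero_mul, zero_mul, zero_add]
    by_cases he : Even j
    · rw [hXc.zero (2 * k - 1 - j) (by omega) (by grind)]; ring
    · rw [hXc.zero j (by omega) he]; ring
  have hE1 : |poho d k q X 1| = W k 1 ^ 2 := by
    unfold poho pz
    rw [hX0, h1 0 (by omega), abs_zero, Real.zero_rpow (by linarith), mul_zero, mul_zero, add_zero,
      Finset.sum_eq_single (k - 1)]
    · rw [show k - 1 + 1 = k by omega, show 2 * k - 1 - (k - 1) = k by omega, hX k (by omega),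
        hX (k - 1) (by omega), h1 (k - 1) (by omega)]
      have : wt d (k - 1) 1 = 1 := by unfold wt; simp
      rw [this, abs_mul, abs_pow, abs_neg, abs_one, one_pow, mul_zero, add_zero, one_mul, one_mul,
        one_mul, abs_mul_self, sq]
    · intro j hj hne
      have hj' := Finset.mem_range.1 hj
      rcases lt_or_gt_of_ne hne with h | h
      · rw [hX (j + 1) (by omega), hX j (by omega), h1 (j + 1) (by omega), h1 j (by omega)]; ring
      · rw [hX (2 * k - 1 - j) (by omega), h1 (2 * k - 1 - j) (by omega)]; ring
    · intro h; exact absurd (Finset.mem_range.2 (by omega)) h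
  rw [hE0, sub_zero, hE1] at hb
  simpa using hb

/-! ### Compactness -/

/-- Continuous convergence on `[0,1]`: `F i y → g x` as `i → ∞` and `y → x` in `[0,1]`. For
continuous limits this is the same as uniform convergence. -/
structure CC (F : ℕ → ℝ → ℝ) (g : ℝ → ℝ) : Prop where
  cont : ContinuousOn g (Set.Icc 0 1)
  lim : ∀ x ∈ Set.Icc (0 : ℝ) 1,
    Tendsto (fun p : ℕ × ℝ => F p.1 p.2) (atTop ×ˢ 𝓝[Set.Icc 0 1] x) (𝓝 (g x))

lemma CC.subseq {F : ℕ → ℝ → ℝ} {g : ℝ → ℝ} (h : CC F g) {φ : ℕ → ℕ} (hφ : Tendsto φ atTop atTop) :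
    CC (fun i => F (φ i)) g :=
  ⟨h.cont, fun x hx => (h.lim x hx).comp (hφ.prodMap tendsto_id)⟩

lemma CC.pointwise {F : ℕ → ℝ → ℝ} {g : ℝ → ℝ} (h : CC F g) {x : ℝ} (hx : x ∈ Set.Icc (0 : ℝ) 1) :
    Tendsto (fun i => F i x) atTop (𝓝 (g x)) :=
  (h.lim x hx).comp (tendsto_id.prodMk (tendsto_const_pure.mono_right (pure_le_nhdsWithin hx)))

/-- A limit of chains is a chain. -/
lemma CC.chain {d m : ℕ} {w : ℕ → ℕ → ℝ → ℝ} {G : ℕ → ℝ → ℝ} (hw : ∀ i, Chain d m (w i))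
    (hG : ∀ j ≤ m, CC (fun i => w i j) (G j)) : Chain d m G := by
  refine ⟨fun j hj => (hG j hj.le).cont, fun j hj r hr => ?_, fun j hj ho => ?_⟩
  · have hsub : Set.Ioo (0 : ℝ) 1 ⊆ Set.Icc 0 1 := Set.Ioo_subset_Icc_self
    refine hasDerivAt_of_tendstoLocallyUniformlyOn (l := atTop) (s := Set.Ioo (0 : ℝ) 1)
      (f := fun i => w i j) (f' := fun i r => wt d j r * w i (j + 1) r)
      (g' := fun r => wt d j r * G (j + 1) r) isOpen_Ioo ?_
      (Eventually.of_forall fun i x hx => (hw i).deriv j hj x hx)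
      (fun x hx => (hG j hj.le).pointwise (hsub hx)) hr
    rw [tendstoLocallyUniformlyOn_iff_forall_tendsto]
    intro x hx
    have hwt : ContinuousAt (wt d j) x := (hasDerivAt_wt d j hx.1).continuousAt
    have hle : 𝓝[Set.Ioo (0 : ℝ) 1] x ≤ 𝓝[Set.Icc 0 1] x := nhdsWithin_mono x hsub
    have h2 : Tendsto (fun p : ℕ × ℝ => p.2) (atTop ×ˢ 𝓝[Set.Ioo (0 : ℝ) 1] x)
        (𝓝[Set.Ioo (0 : ℝ) 1] x) := tendsto_snd
    have hw2 : Tendsto (fun p : ℕ × ℝ => wt d j p.2) (atTop ×ˢ 𝓝[Set.Ioo (0 : ℝ) 1] x)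
        (𝓝 (wt d j x)) := (hwt.tendsto.mono_left nhdsWithin_le_nhds).comp h2
    have e1 := hw2.mul ((((hG (j + 1) hj).cont x (hsub hx)).tendsto.mono_left hle).comp h2)
    have e2 := hw2.mul (((hG (j + 1) hj).lim x (hsub hx)).mono_left
      (Filter.prod_mono_right _ hle))
    exact (e1.prodMk_nhds e2).mono_right (nhds_le_uniformity _)
  · refine tendsto_nhds_unique ((hG j hj.le).pointwise (x := 0) (by simp)) ?_
    simp only [fun i => (hw i).zero j hj ho]
    exact tendsto_const_nhds

/-- The restriction of the first `m` functions of a chain to `[0,1]`. -/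
def Chain.toBCF {d m : ℕ} {W : ℕ → ℝ → ℝ} (hW : Chain d m W) (j : Fin m) :
    BoundedContinuousFunction (Set.Icc (0 : ℝ) 1) ℝ :=
  BoundedContinuousFunction.mkOfCompact
    ⟨fun x => W j x, continuousOn_iff_continuous_domRestrict.1 (hW.cont j j.2)⟩

/-- Consecutive bounds make the functions of a chain Lipschitz; for even `j` the weight
is compensated by `|w_(j+1)| ≤ K r^d`. -/
lemma Chain.lip {d k : ℕ} {W : ℕ → ℝ → ℝ} {K : ℝ} (hW : Chain d (2 * k) W)
    (hK : ∀ j ≤ 2 * k, ∀ r ∈ Set.Icc (0 : ℝ) 1, |W j r| ≤ K) {j : ℕ} (hj : j < 2 * k)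
    {x y : ℝ} (hx : x ∈ Set.Icc (0 : ℝ) 1) (hy : y ∈ Set.Icc (0 : ℝ) 1) :
    |W j x - W j y| ≤ K * |x - y| := by
  have hK0 : 0 ≤ K := (abs_nonneg _).trans (hK 0 (by omega) 0 (by simp))
  refine mvt_bound (hW.cont j hj) (hW.deriv j hj) (fun r hr => ?_) hx hy
  have hp : 0 < r ^ d := pow_pos hr.1 d
  have hp1 : r ^ d ≤ 1 := pow_le_one₀ hr.1.le hr.2.le
  have hr' : r ∈ Set.Icc (0 : ℝ) 1 := ⟨hr.1.le, hr.2.le⟩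
  by_cases he : Even j
  · rw [wt_even he, abs_mul, abs_inv, abs_of_pos hp, inv_mul_le_iff₀ hp]
    have hodd : ¬ Even (j + 1) := by grind
    have hj2 : j + 2 ≤ 2 * k := by rcases he with ⟨b, hb⟩; omega
    have h1 := mvt_bound (a := 0) (b := r) (C := r ^ d * K)
      ((hW.cont (j + 1) (by omega)).mono (Set.Icc_subset_Icc_right hr.2.le))
      (fun x hx => hW.deriv (j + 1) (by omega) x ⟨hx.1, hx.2.trans hr.2⟩) (fun x hx => by
      rw [wt_odd hodd, abs_mul, abs_of_nonneg (pow_nonneg hx.1.le d)]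
      exact mul_le_mul (pow_le_pow_left₀ hx.1.le hx.2.le d)
        (hK (j + 2) hj2 x ⟨hx.1.le, (hx.2.trans hr.2).le⟩)
        (abs_nonneg _) hp.le) (x := r) (y := 0) ⟨hr.1.le, le_rfl⟩ ⟨le_rfl, hr.1.le⟩
    rw [hW.zero _ (by omega) hodd, sub_zero, sub_zero, abs_of_pos hr.1] at h1
    exact h1.trans (mul_le_of_le_one_right (by positivity) hr.2.le)
  · rw [wt_odd he, abs_mul, abs_of_pos hp]
    calc r ^ d * |W (j + 1) r| ≤ 1 * K :=
          mul_le_mul hp1 (hK (j + 1) (by omega) r hr') (abs_nonneg _) zero_le_one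
      _ = K := one_mul K

/-- Arzelà–Ascoli for bounded, nondegenerate sequences of chains. -/
lemma chain_compact {d k : ℕ} {w : ℕ → ℕ → ℝ → ℝ} {K : ℝ} (hw : ∀ i, Chain d (2 * k) (w i))
    (hK : ∀ i, ∀ j ≤ 2 * k, ∀ r ∈ Set.Icc (0 : ℝ) 1, |w i j r| ≤ K)
    (hne : ∀ i, ∃ j < 2 * k, ∃ r ∈ Set.Icc (0 : ℝ) 1, 1 / 2 ≤ |w i j r|) :
    ∃ (φ : ℕ → ℕ) (G : ℕ → ℝ → ℝ), StrictMono φ ∧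
      (∀ j < 2 * k, CC (fun i => w (φ i) j) (G j)) ∧
      ∃ j < 2 * k, ∃ r ∈ Set.Icc (0 : ℝ) 1, G j r ≠ 0 := by
  have hK0 : 0 ≤ K := (abs_nonneg _).trans (hK 0 0 (by omega) 0 (by simp))
  let A : Set (BoundedContinuousFunction (Set.Icc (0 : ℝ) 1) ℝ) :=
    {f | (∀ x, f x ∈ Set.Icc (-K) K) ∧ ∀ x y, |f x - f y| ≤ K * |(x : ℝ) - y|}
  have hA : IsCompact A := by
    refine BoundedContinuousFunction.arzela_ascoli₂ (Set.Icc (-K) K) isCompact_Icc A ?_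
      (fun f x hf => hf.1 x) ?_
    · have hev : ∀ x : Set.Icc (0 : ℝ) 1,
          Continuous fun f : BoundedContinuousFunction (Set.Icc (0 : ℝ) 1) ℝ => f x :=
        fun x => continuous_eval_const x
      refine IsClosed.and ?_ ?_
      · simp only [Set.ofPred_forall]
        exact isClosed_iInter fun x => isClosed_Icc.preimage (hev x)
      · simp only [Set.ofPred_forall]
        exact isClosed_iInter fun x => isClosed_iInter fun y =>
          isClosed_le ((hev x).sub (hev y)).abs continuous_const
    · refine (LipschitzWith.uniformEquicontinuous _ K.toNNReal fun f => ?_).equicontinuous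
      refine LipschitzWith.of_dist_le_mul fun x y => ?_
      rw [Real.dist_eq, Subtype.dist_eq, Real.dist_eq, Real.coe_toNNReal _ hK0]
      exact f.2.2 x y
  let F : ℕ → Fin (2 * k) → BoundedContinuousFunction (Set.Icc (0 : ℝ) 1) ℝ :=
    fun i => (hw i).toBCF
  have hF : ∀ i j x, F i j x = w i j x := fun i j x => rfl
  obtain ⟨G, -, φ, hφ, hlim⟩ := (isCompact_univ_pi fun _ : Fin (2 * k) => hA).tendsto_subseq
    (x := F) (fun i j _ => ⟨fun x => abs_le.1 (hK i j j.2.le x x.2),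
      fun x y => (hw i).lip (hK i) j.2 x.2 y.2⟩)
  let g : ℕ → ℝ → ℝ := fun j r =>
    if h : j < 2 * k then G ⟨j, h⟩ (Set.projIcc 0 1 zero_le_one r) else 0
  have hg : ∀ j (h : j < 2 * k), g j = fun r => G ⟨j, h⟩ (Set.projIcc 0 1 zero_le_one r) :=
    fun j h => by funext r; simp [g, h]
  refine ⟨φ, g, hφ, fun j hj => ?_, ?_⟩
  · rw [hg j hj]
    have hlimj : Tendsto (fun i => F (φ i) ⟨j, hj⟩) atTop (𝓝 (G ⟨j, hj⟩)) :=
      (tendsto_pi_nhds.1 hlim) ⟨j, hj⟩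
    refine ⟨((G ⟨j, hj⟩).continuous.comp continuous_projIcc).continuousOn, fun x hx => ?_⟩
    have e1 : Tendsto (fun p : ℕ × ℝ => (F (φ p.1) ⟨j, hj⟩,
        Set.projIcc (0 : ℝ) 1 zero_le_one p.2)) (atTop ×ˢ 𝓝[Set.Icc 0 1] x)
        (𝓝 (G ⟨j, hj⟩, Set.projIcc 0 1 zero_le_one x)) :=
      (hlimj.comp tendsto_fst).prodMk_nhds
        (((continuous_projIcc.tendsto x).mono_left nhdsWithin_le_nhds).comp tendsto_snd)
    have e2 := ((continuous_eval
      (F := BoundedContinuousFunction (Set.Icc (0 : ℝ) 1) ℝ)).tendsto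
      (G ⟨j, hj⟩, Set.projIcc (0 : ℝ) 1 zero_le_one x)).comp e1
    refine e2.congr' ?_
    have : ∀ᶠ p : ℕ × ℝ in atTop ×ˢ 𝓝[Set.Icc 0 1] x, p.2 ∈ Set.Icc (0 : ℝ) 1 :=
      tendsto_snd.eventually self_mem_nhdsWithin
    filter_upwards [this] with p hp
    simp only [Function.comp_apply, hF, Set.projIcc_of_mem zero_le_one hp]
  · by_contra! hz
    have hG0 : G = 0 := by
      funext j
      ext x
      have := hz j j.2 x x.2
      rw [hg j j.2] at this
      simpa using this
    have hn : ∀ i, 1 / 2 ≤ ‖F (φ i)‖ := fun i => by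
      obtain ⟨j, hj, r, hr, h⟩ := hne (φ i)
      calc 1 / 2 ≤ ‖F (φ i) ⟨j, hj⟩ ⟨r, hr⟩‖ := h
        _ ≤ ‖F (φ i) ⟨j, hj⟩‖ := BoundedContinuousFunction.norm_coe_le_norm _ _
        _ ≤ ‖F (φ i)‖ := norm_le_pi_norm _ _
    have := ge_of_tendsto' hlim.norm hn
    rw [hG0, norm_zero] at this
    norm_num at this

/-- The largest sup norm among the first `2k` functions of a chain, as a normalising constant. The
factor `1/2` avoids having to attain the maximum. -/
lemma Chain.exists_norm {d k : ℕ} {W : ℕ → ℝ → ℝ} (hk : 1 ≤ k) (hW : Chain d (2 * k) W)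
    (hne : ∃ r ∈ Set.Icc (0 : ℝ) 1, W 0 r ≠ 0) :
    ∃ N : ℝ, 0 < N ∧ (∀ j < 2 * k, ∀ r ∈ Set.Icc (0 : ℝ) 1, |W j r| ≤ N) ∧
      ∃ j < 2 * k, ∃ r ∈ Set.Icc (0 : ℝ) 1, N / 2 ≤ |W j r| := by
  have hle : ∀ j < 2 * k, ∀ r ∈ Set.Icc (0 : ℝ) 1, |W j r| ≤ ‖hW.toBCF‖ := fun j hj r hr =>
    calc |W j r| = ‖hW.toBCF ⟨j, hj⟩ ⟨r, hr⟩‖ := rfl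
      _ ≤ ‖hW.toBCF ⟨j, hj⟩‖ := BoundedContinuousFunction.norm_coe_le_norm _ _
      _ ≤ ‖hW.toBCF‖ := norm_le_pi_norm _ _
  have hpos : 0 < ‖hW.toBCF‖ := by
    obtain ⟨r, hr, h⟩ := hne
    exact (abs_pos.2 h).trans_le (hle 0 (by omega) r hr)
  refine ⟨‖hW.toBCF‖, hpos, hle, ?_⟩
  by_contra! h
  have : ‖hW.toBCF‖ ≤ ‖hW.toBCF‖ / 2 := by
    refine (pi_norm_le_iff_of_nonneg (by positivity)).2 fun j => ?_
    refine (BoundedContinuousFunction.norm_le (by positivity)).2 fun x => ?_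
    exact (h j j.2 x x.2).le
  linarith

lemma Chain.div {d m : ℕ} {W : ℕ → ℝ → ℝ} (hW : Chain d m W) (N : ℝ) :
    Chain d m (fun j r => W j r / N) := by
  refine ⟨fun j hj => (hW.cont j hj).div_const N, fun j hj r hr => ?_, fun j hj ho => ?_⟩
  · rw [← mul_div_assoc]; exact (hW.deriv j hj r hr).div_const N
  · simp [hW.zero j hj ho]

/-- There is no uniformly bounded sequence of nontrivial critical chains with Dirichlet
conditions and `λ_i → 0`. -/
lemma no_bounded_sequence {d k : ℕ} {q C : ℝ} (hk : 1 ≤ k) (hq : 0 < q)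
    (hqd : q * (d + 1) = 2 * k * (q + 2)) {W : ℕ → ℕ → ℝ → ℝ} {lam : ℕ → ℝ}
    (hlam0 : ∀ i, 0 ≤ lam i) (hlam : Tendsto lam atTop (𝓝 0))
    (hW : ∀ i, Chain d (2 * k) (W i)) (hc : ∀ i, ContinuousOn (W i (2 * k)) (Set.Icc 0 1))
    (heq : ∀ i, ∀ r ∈ Set.Icc (0 : ℝ) 1,
      W i (2 * k) r = (lam i + |W i 0 r| ^ q) * W i 0 r)
    (h1 : ∀ i, ∀ j < k, W i j 1 = 0)
    (hC : ∀ i, ∀ r ∈ Set.Icc (0 : ℝ) 1, |W i 0 r| ≤ C)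
    (hne : ∀ i, ∃ r ∈ Set.Icc (0 : ℝ) 1, W i 0 r ≠ 0) : False := by
  choose N hN hNle hNge using fun i => (hW i).exists_norm hk (hne i)
  have hC0 : 0 ≤ C := (abs_nonneg _).trans (hC 0 0 (by simp))
  obtain ⟨Λ, hΛ⟩ := hlam.bddAbove_range
  have hΛ' : ∀ i, lam i ≤ Λ := fun i => hΛ (Set.mem_range_self i)
  have hΛ0 : 0 ≤ Λ := (hlam0 0).trans (hΛ' 0)
  have hCq : 0 ≤ C ^ q := Real.rpow_nonneg hC0 q
  let w : ℕ → ℕ → ℝ → ℝ := fun i j r => W i j r / N i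
  have hw : ∀ i, Chain d (2 * k) (w i) := fun i => (hW i).div (N i)
  have hwle : ∀ i, ∀ j < 2 * k, ∀ r ∈ Set.Icc (0 : ℝ) 1, |w i j r| ≤ 1 := fun i j hj r hr => by
    simp only [w]
    rw [abs_div, abs_of_pos (hN i), div_le_one (hN i)]
    exact hNle i j hj r hr
  have hwtop : ∀ i, ∀ r ∈ Set.Icc (0 : ℝ) 1,
      w i (2 * k) r = (lam i + |W i 0 r| ^ q) * w i 0 r := fun i r hr => by
    simp only [w]; rw [heq i r hr, mul_div_assoc]
  have hwtop_le : ∀ i, ∀ r ∈ Set.Icc (0 : ℝ) 1, |w i (2 * k) r| ≤ (Λ + C ^ q) * |w i 0 r| := by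
    intro i r hr
    have h2 : 0 ≤ |W i 0 r| ^ q := Real.rpow_nonneg (abs_nonneg _) q
    rw [hwtop i r hr, abs_mul, abs_of_nonneg (add_nonneg (hlam0 i) h2)]
    have h3 : |W i 0 r| ^ q ≤ C ^ q := Real.rpow_le_rpow (abs_nonneg _) (hC i r hr) hq.le
    gcongr
    exact hΛ' i
  obtain ⟨φ, G, hφ, hG, hGne⟩ := chain_compact (K := 1 + (Λ + C ^ q)) hw (fun i j hj r hr => by
      rcases hj.lt_or_eq with h | rfl
      · linarith [hwle i j h r hr]
      · have := hwtop_le i r hr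
        have h2 := mul_le_mul_of_nonneg_left (hwle i 0 (by omega) r hr) (add_nonneg hΛ0 hCq)
        linarith) (fun i => by
      obtain ⟨j, hj, r, hr, h⟩ := hNge i
      refine ⟨j, hj, r, hr, ?_⟩
      simp only [w]
      rw [abs_div, abs_of_pos (hN i), le_div_iff₀ (hN i)]
      linarith)
  have hG0 : CC (fun i => w (φ i) 0) (G 0) := hG 0 (by omega)
  -- after passing to a further subsequence the potentials converge as well
  obtain ⟨ψ, V, hψ, hVc, hV0, hVlim⟩ : ∃ (ψ : ℕ → ℕ) (V : ℝ → ℝ), Tendsto ψ atTop atTop ∧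
      ContinuousOn V (Set.Icc 0 1) ∧ (∀ r, 0 ≤ V r) ∧
      CC (fun i => w (φ (ψ i)) (2 * k)) (fun r => V r * G 0 r) := by
    by_cases hb : ∃ R, ∃ᶠ i in atTop, N (φ i) ≤ R
    · obtain ⟨R, hR⟩ := hb
      obtain ⟨L, -, ψ, hψ, hL⟩ := tendsto_subseq_of_frequently_bounded
        (Metric.isBounded_Icc 0 R) (x := fun i => N (φ i)) (hR.mono fun i hi => ⟨(hN _).le, hi⟩)
      have hψ' := hψ.tendsto_atTop
      have hVc : ContinuousOn (fun r => |L * G 0 r| ^ q) (Set.Icc 0 1) :=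
        (continuousOn_const.mul hG0.cont).abs.rpow_const (fun _ _ => Or.inr hq.le)
      refine ⟨ψ, fun r => |L * G 0 r| ^ q, hψ', hVc,
        fun r => Real.rpow_nonneg (abs_nonneg _) q, hVc.mul hG0.cont, fun x hx => ?_⟩
      have e0 := (hG0.subseq hψ').lim x hx
      have e1 := (hL.comp (tendsto_fst (f := atTop) (g := 𝓝[Set.Icc (0 : ℝ) 1] x))).mul e0
      have e2 := e1.abs.rpow_const (p := q) (Or.inr hq.le)
      have e3 := ((hlam.comp (hφ.tendsto_atTop.comp hψ')).comp
        (tendsto_fst (f := atTop) (g := 𝓝[Set.Icc (0 : ℝ) 1] x))).add e2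
      have e4 := e3.mul e0
      rw [zero_add] at e4
      refine e4.congr' ?_
      have : ∀ᶠ p : ℕ × ℝ in atTop ×ˢ 𝓝[Set.Icc 0 1] x, p.2 ∈ Set.Icc (0 : ℝ) 1 :=
        tendsto_snd.eventually self_mem_nhdsWithin
      filter_upwards [this] with p hp
      rw [hwtop _ _ hp]
      simp only [Function.comp_apply]
      rw [show N (φ (ψ p.1)) * w (φ (ψ p.1)) 0 p.2 = W (φ (ψ p.1)) 0 p.2 from
        mul_div_cancel₀ _ (hN _).ne']
    · -- if the normalising constants blow up, the normalised `w₀` tends to zero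
      have hinf : Tendsto (fun i => N (φ i)) atTop atTop := by
        refine tendsto_atTop.2 fun R => ?_
        by_contra h
        refine hb ⟨R, ?_⟩
        exact (Filter.not_eventually.1 h).mono fun i hi => (not_le.1 hi).le
      refine ⟨id, fun _ => 0, tendsto_id, continuousOn_const, fun _ => le_rfl, ?_⟩
      simp only [zero_mul]
      refine ⟨continuousOn_const, fun x hx => ?_⟩
      have hz : Tendsto (fun p : ℕ × ℝ => (Λ + C ^ q) * (C / N (φ p.1)))
          (atTop ×ˢ 𝓝[Set.Icc 0 1] x) (𝓝 0) := by
        have := (((tendsto_const_nhds (x := C)).div_atTop hinf).const_mul (Λ + C ^ q)).comp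
          (tendsto_fst (f := atTop) (g := 𝓝[Set.Icc (0 : ℝ) 1] x))
        simpa [Function.comp_def] using this
      refine squeeze_zero_norm' ?_ hz
      have : ∀ᶠ p : ℕ × ℝ in atTop ×ˢ 𝓝[Set.Icc 0 1] x, p.2 ∈ Set.Icc (0 : ℝ) 1 :=
        tendsto_snd.eventually self_mem_nhdsWithin
      filter_upwards [this] with p hp
      refine (hwtop_le _ _ hp).trans (mul_le_mul_of_nonneg_left ?_ (add_nonneg hΛ0 hCq))
      simp only [w, id]
      rw [abs_div, abs_of_pos (hN _)]
      exact div_le_div_of_nonneg_right (hC _ _ hp) (hN _).le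
  let H : ℕ → ℝ → ℝ := fun j => if j < 2 * k then G j else fun r => V r * G 0 r
  have hH : ∀ j < 2 * k, H j = G j := fun j hj => if_pos hj
  have hH' : H (2 * k) = fun r => V r * G 0 r := if_neg (by omega)
  have hHlim : ∀ j ≤ 2 * k, CC (fun i => w (φ (ψ i)) j) (H j) := by
    intro j hj
    rcases hj.lt_or_eq with h | rfl
    · rw [hH j h]; exact (hG j h).subseq hψ
    · rw [hH']; exact hVlim
  have hHc : Chain d (2 * k) H := CC.chain (fun i => hw (φ (ψ i))) hHlim
  have hH1 : ∀ j ≤ k, H j 1 = 0 := by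
    intro j hj
    have hp := (hHlim j (by omega)).pointwise (x := 1) (by simp)
    refine tendsto_nhds_unique hp ?_
    rcases hj.lt_or_eq with h | rfl
    · simp only [w, fun i => h1 i j h, zero_div]
      exact tendsto_const_nhds
    -- the Pohozaev identity supplies the additional boundary condition in the limit
    · have hb : ∀ i, w i j 1 ^ 2 ≤ 2 * j * lam i := fun i => by
        have := (hW i).poho_bound hk hq hqd (hlam0 i) (hc i)
          (fun r hr => heq i r ⟨hr.1.le, hr.2.le⟩) (h1 i) (hNle i 0 (by omega))
        simp only [w]
        rw [div_pow, div_le_iff₀ (pow_pos (hN i) 2)]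
        exact this
      have hl : Tendsto (fun i => 2 * (j : ℝ) * lam (φ (ψ i))) atTop (𝓝 0) := by
        have := (hlam.comp (hφ.tendsto_atTop.comp hψ)).const_mul (2 * (j : ℝ))
        simpa using this
      have hsq : Tendsto (fun i => w (φ (ψ i)) j 1 ^ 2) atTop (𝓝 0) :=
        squeeze_zero (fun i => sq_nonneg _) (fun i => hb _) hl
      have := hsq.sqrt
      rw [Real.sqrt_zero] at this
      simp only [Real.sqrt_sq_eq_abs] at this
      exact (tendsto_zero_iff_abs_tendsto_zero _).2 this
  obtain ⟨K, hK⟩ := isCompact_Icc.exists_bound_of_continuousOn hVc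
  have hzero := hHc.eq_zero (V := V) (K := K) hk hH1
    (fun r _ => by rw [hH', hH 0 (by omega)])
    (fun r hr => ⟨hV0 r, (le_abs_self _).trans (hK r ⟨hr.1.le, hr.2.le⟩)⟩)
  obtain ⟨j, hj, r, hr, h⟩ := hGne
  exact h (by rw [← hH j hj]; exact hzero j hj r hr)

/-! ### The Laplacian of radial functions -/

lemma lap_contDiff {n m : ℕ} {v : EuclideanSpace ℝ (Fin n) → ℝ} (hv : ContDiff ℝ (m + 2 : ℕ) v) :
    ContDiff ℝ m (lap v) := by
  have h : ContDiff ℝ m (iteratedFDeriv ℝ 2 v) := hv.iteratedFDeriv_right (by norm_cast)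
  refine ContDiff.sum fun i _ => ?_
  exact (ContinuousMultilinearMap.apply ℝ (fun _ : Fin 2 => EuclideanSpace ℝ (Fin n)) ℝ
    (fun _ => EuclideanSpace.single i 1)).contDiff.comp h

lemma laplacian_eq_sum {n : ℕ} {ι : Type*} [Fintype ι] (v : EuclideanSpace ℝ (Fin n) → ℝ)
    (b : OrthonormalBasis ι ℝ (EuclideanSpace ℝ (Fin n))) (x : EuclideanSpace ℝ (Fin n)) :
    Laplacian.laplacian v x = ∑ i, iteratedFDeriv ℝ 2 v x (fun _ => b i) := by
  rw [InnerProductSpace.laplacian_eq_iteratedFDeriv_orthonormalBasis v b]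
  refine Finset.sum_congr rfl fun i _ => ?_
  congr 1
  funext j
  fin_cases j <;> rfl

lemma lap_eq_sum {n : ℕ} {ι : Type*} [Fintype ι] (v : EuclideanSpace ℝ (Fin n) → ℝ)
    (b : OrthonormalBasis ι ℝ (EuclideanSpace ℝ (Fin n))) (x : EuclideanSpace ℝ (Fin n)) :
    lap v x = ∑ i, iteratedFDeriv ℝ 2 v x (fun _ => b i) := by
  rw [← laplacian_eq_sum v b, laplacian_eq_sum v (EuclideanSpace.basisFun (Fin n) ℝ)]
  simp [lap]

/-- The Laplacian commutes with the reflection exchanging two points of the same norm. -/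
lemma lap_radial {n : ℕ} {v : EuclideanSpace ℝ (Fin n) → ℝ} (hv : ContDiff ℝ 2 v)
    (hr : ∀ x y : EuclideanSpace ℝ (Fin n), ‖x‖ = ‖y‖ → v x = v y)
    (x y : EuclideanSpace ℝ (Fin n)) (hxy : ‖x‖ = ‖y‖) : lap v x = lap v y := by
  let R : EuclideanSpace ℝ (Fin n) ≃ₗᵢ[ℝ] EuclideanSpace ℝ (Fin n) :=
    (ℝ ∙ (x - y))ᗮ.reflection
  have hRx : R x = y := Submodule.reflection_sub hxy
  let g : EuclideanSpace ℝ (Fin n) →L[ℝ] EuclideanSpace ℝ (Fin n) :=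
    R.toContinuousLinearEquiv.toContinuousLinearMap
  have hg : ∀ z, g z = R z := fun z => rfl
  have hvg : v ∘ g = v := by
    funext z
    exact hr _ _ (R.norm_map z)
  rw [lap_eq_sum v ((EuclideanSpace.basisFun (Fin n) ℝ).map R) y]
  simp only [lap]
  refine Finset.sum_congr rfl fun i _ => ?_
  have := g.iteratedFDeriv_comp_right hv x (i := 2) le_rfl
  rw [hvg] at this
  rw [this, hg, hRx]
  simp [ContinuousMultilinearMap.compContinuousLinearMap_apply, hg]

lemma hasDerivAt_line {n : ℕ} {v : EuclideanSpace ℝ (Fin n) → ℝ} (hv : ContDiff ℝ 1 v)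
    (x h : EuclideanSpace ℝ (Fin n)) (t : ℝ) :
    HasDerivAt (fun s : ℝ => v (x + s • h)) (fderiv ℝ v (x + t • h) h) t := by
  have h1 : HasDerivAt (fun s : ℝ => x + s • h) h t := by
    simpa using ((hasDerivAt_id t).smul_const h).const_add x
  exact ((hv.differentiable one_ne_zero) _).hasFDerivAt.comp_hasDerivAt t h1

lemma hasDerivAt_line_two {n : ℕ} {v : EuclideanSpace ℝ (Fin n) → ℝ} (hv : ContDiff ℝ 2 v)
    (x h : EuclideanSpace ℝ (Fin n)) (t : ℝ) :
    HasDerivAt (fun s : ℝ => fderiv ℝ v (x + s • h) h)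
      (iteratedFDeriv ℝ 2 v (x + t • h) (fun _ => h)) t := by
  have h1 : HasDerivAt (fun s : ℝ => x + s • h) h t := by
    simpa using ((hasDerivAt_id t).smul_const h).const_add x
  have h2 : ContDiff ℝ 1 (fderiv ℝ v) := hv.fderiv_right (by norm_num)
  have h3 := ((h2.differentiable one_ne_zero) (x + t • h)).hasFDerivAt.comp_hasDerivAt t h1
  rw [iteratedFDeriv_two_apply]
  exact (h3.clm_apply (hasDerivAt_const t h)).congr_deriv (by simp)

/-- The base direction along which radial functions are restricted. -/
def e0 (d : ℕ) : EuclideanSpace ℝ (Fin (d + 1)) := EuclideanSpace.single 0 1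

lemma norm_smul_e0 (d : ℕ) (r : ℝ) : ‖r • e0 d‖ = |r| := by
  simp [e0, norm_smul]

/-- The profile of a radial function. -/
def prof {d : ℕ} (v : EuclideanSpace ℝ (Fin (d + 1)) → ℝ) (t : ℝ) : ℝ := v (t • e0 d)

lemma prof_contDiff {d : ℕ} {m : WithTop ℕ∞} {v : EuclideanSpace ℝ (Fin (d + 1)) → ℝ}
    (hv : ContDiff ℝ m v) : ContDiff ℝ m (prof v) :=
  hv.comp (contDiff_id.smul contDiff_const)

lemma hasDerivAt_prof {d : ℕ} {v : EuclideanSpace ℝ (Fin (d + 1)) → ℝ} (hv : ContDiff ℝ 1 v)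
    (t : ℝ) : HasDerivAt (prof v) (fderiv ℝ v (t • e0 d) (e0 d)) t := by
  have := hasDerivAt_line hv 0 (e0 d) t
  simp only [zero_add] at this
  exact this

lemma norm_add_single {d : ℕ} {i : Fin (d + 1)} (hi : i ≠ 0) (r t : ℝ) :
    ‖r • e0 d + t • EuclideanSpace.single i (1 : ℝ)‖ = √(r ^ 2 + t ^ 2) := by
  have h : inner ℝ (r • e0 d) (t • EuclideanSpace.single i (1 : ℝ)) = 0 := by
    simp [e0, inner_smul_left, inner_smul_right, EuclideanSpace.inner_single_left, hi.symm]
  rw [eq_comm, Real.sqrt_eq_iff_mul_self_eq (by positivity) (norm_nonneg _),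
    norm_add_sq_eq_norm_sq_add_norm_sq_of_inner_eq_zero _ _ h, norm_smul_e0, norm_smul]
  simp [sq]

/-- In a direction orthogonal to `x = r e₀` the second derivative of a radial function with profile
`f` is `f'(r)/r`. -/
lemma second_deriv_orth {d : ℕ} {v : EuclideanSpace ℝ (Fin (d + 1)) → ℝ} (hv : ContDiff ℝ 2 v)
    (hr : ∀ x y : EuclideanSpace ℝ (Fin (d + 1)), ‖x‖ = ‖y‖ → v x = v y)
    {i : Fin (d + 1)} (hi : i ≠ 0) {r : ℝ} (h0 : 0 < r) :
    iteratedFDeriv ℝ 2 v (r • e0 d) (fun _ => EuclideanSpace.single i 1) =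
      deriv (prof v) r / r := by
  have hv1 : ContDiff ℝ 1 v := hv.of_le (by norm_num)
  have hf1 : ContDiff ℝ 1 (deriv (prof v)) := by
    have : ContDiff ℝ (1 + 1) (prof v) := by
      rw [one_add_one_eq_two]; exact prof_contDiff hv
    exact ((contDiff_succ_iff_deriv (n := 1)).1 this).2.2
  have hpos : ∀ t : ℝ, 0 < r ^ 2 + t ^ 2 := fun t => by positivity
  have hφ : ∀ t : ℝ, HasDerivAt (fun s : ℝ => √(r ^ 2 + s ^ 2)) (t / √(r ^ 2 + t ^ 2)) t := by
    intro t
    have h1 : HasDerivAt (fun s : ℝ => r ^ 2 + s ^ 2) (2 * t) t := by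
      simpa using (hasDerivAt_pow 2 t).const_add (r ^ 2)
    convert h1.sqrt (hpos t).ne' using 1
    field_simp
  have hcurve : (fun s : ℝ => v (r • e0 d + s • EuclideanSpace.single i (1 : ℝ))) =
      fun s => prof v (√(r ^ 2 + s ^ 2)) := by
    funext s
    refine hr _ _ ?_
    rw [norm_add_single hi, norm_smul_e0, abs_of_nonneg (Real.sqrt_nonneg _)]
  have hfirst : (fun t : ℝ => fderiv ℝ v (r • e0 d + t • EuclideanSpace.single i (1 : ℝ))
      (EuclideanSpace.single i 1)) =
      fun t => t * (deriv (prof v) (√(r ^ 2 + t ^ 2)) / √(r ^ 2 + t ^ 2)) := by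
    funext t
    have h1 := hasDerivAt_line hv1 (r • e0 d) (EuclideanSpace.single i (1 : ℝ)) t
    rw [hcurve] at h1
    have h2 := ((prof_contDiff hv1).differentiable one_ne_zero
      (√(r ^ 2 + t ^ 2))).hasDerivAt.comp t (hφ t)
    rw [h1.unique h2]
    ring
  have h1 := hasDerivAt_line_two hv (r • e0 d) (EuclideanSpace.single i (1 : ℝ)) 0
  rw [hfirst, zero_smul, add_zero] at h1
  have hs : √(r ^ 2 + 0 ^ 2) = r := by simp [Real.sqrt_sq h0.le]
  have hq : DifferentiableAt ℝ
      (fun t : ℝ => deriv (prof v) (√(r ^ 2 + t ^ 2)) / √(r ^ 2 + t ^ 2)) 0 := by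
    refine DifferentiableAt.div ?_ (hφ 0).differentiableAt (Real.sqrt_pos.2 (hpos 0)).ne'
    exact (hf1.differentiable one_ne_zero _).comp (0 : ℝ) (hφ 0).differentiableAt
  have h2 := (hasDerivAt_id (0 : ℝ)).mul hq.hasDerivAt
  have h3 := h1.unique h2
  simpa [hs, Real.sqrt_sq h0.le] using h3

/-- The Laplacian in radial coordinates, in divergence form. -/
lemma hasDerivAt_radial {d : ℕ} {v : EuclideanSpace ℝ (Fin (d + 1)) → ℝ} (hv : ContDiff ℝ 2 v)
    (hr : ∀ x y : EuclideanSpace ℝ (Fin (d + 1)), ‖x‖ = ‖y‖ → v x = v y) {r : ℝ} (h0 : 0 < r) :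
    HasDerivAt (fun t => t ^ d * deriv (prof v) t) (r ^ d * prof (lap v) r) r := by
  have hd : deriv (prof v) = fun t => fderiv ℝ v (t • e0 d) (e0 d) :=
    funext fun t => (hasDerivAt_prof (hv.of_le (by norm_num)) t).deriv
  have h1 : HasDerivAt (deriv (prof v)) (iteratedFDeriv ℝ 2 v (r • e0 d) (fun _ => e0 d)) r := by
    have := hasDerivAt_line_two hv 0 (e0 d) r
    simp only [zero_add] at this
    rw [hd]
    exact this
  have h2 := (hasDerivAt_pow d r).mul h1
  refine h2.congr_deriv ?_
  have h3 : prof (lap v) r = iteratedFDeriv ℝ 2 v (r • e0 d) (fun _ => e0 d) +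
      d * (deriv (prof v) r / r) := by
    simp only [prof, lap]
    rw [Fin.sum_univ_succ]
    congr 1
    rw [Finset.sum_congr rfl fun i _ => second_deriv_orth hv hr (Fin.succ_ne_zero i) h0]
    simp
  rw [h3]
  cases d with
  | zero => simp
  | succ d => field_simp; simp; ring
/-! ### Radial functions as chains -/

lemma iterLap_succ {n : ℕ} (i : ℕ) (u : EuclideanSpace ℝ (Fin n) → ℝ) :
    iterLap (i + 1) u = lap (iterLap i u) :=
  Function.iterate_succ_apply' _ _ _

lemma iterLap_contDiff {n : ℕ} {u : EuclideanSpace ℝ (Fin n) → ℝ} (i : ℕ) :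
    ∀ m : ℕ, ContDiff ℝ (m + 2 * i : ℕ) u → ContDiff ℝ m (iterLap i u) := by
  induction i with
  | zero => exact fun m h => h
  | succ i ih =>
    intro m h
    rw [iterLap_succ]
    exact lap_contDiff (ih (m + 2) (by convert h using 2; ring))

lemma iterLap_radial {n : ℕ} {u : EuclideanSpace ℝ (Fin n) → ℝ}
    (hr : ∀ x y : EuclideanSpace ℝ (Fin n), ‖x‖ = ‖y‖ → u x = u y) (i : ℕ) :
    ContDiff ℝ (2 * i : ℕ) u →
      ∀ x y : EuclideanSpace ℝ (Fin n), ‖x‖ = ‖y‖ → iterLap i u x = iterLap i u y := by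
  induction i with
  | zero => exact fun _ => hr
  | succ i ih =>
    intro h
    rw [iterLap_succ]
    exact lap_radial (iterLap_contDiff i 2 (by convert h using 2; ring))
      (ih (h.of_le (by norm_cast; omega)))

/-- The chain of a radial function `u` with profile `f`: `f`, `r^d f'`, the profile of `Δu`, … -/
def radChain {d : ℕ} (u : EuclideanSpace ℝ (Fin (d + 1)) → ℝ) (j : ℕ) (r : ℝ) : ℝ :=
  if Even j then prof (iterLap (j / 2) u) r else r ^ d * deriv (prof (iterLap (j / 2) u)) r

lemma radChain_even {d : ℕ} (u : EuclideanSpace ℝ (Fin (d + 1)) → ℝ) (b : ℕ) :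
    radChain u (2 * b) = prof (iterLap b u) := by
  funext r; simp [radChain]

lemma radChain_odd {d : ℕ} (u : EuclideanSpace ℝ (Fin (d + 1)) → ℝ) (b : ℕ) :
    radChain u (2 * b + 1) = fun r => r ^ d * deriv (prof (iterLap b u)) r := by
  funext r
  have h : (2 * b + 1) / 2 = b := by omega
  simp [radChain, h]

lemma radChain_contDiff {d : ℕ} {u : EuclideanSpace ℝ (Fin (d + 1)) → ℝ} (j m : ℕ)
    (hu : ContDiff ℝ (m + j : ℕ) u) : ContDiff ℝ m (radChain u j) := by
  obtain ⟨b, rfl | rfl⟩ := j.even_or_odd'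
  · rw [radChain_even]
    exact prof_contDiff (iterLap_contDiff b m hu)
  · rw [radChain_odd]
    have h1 : ContDiff ℝ ((m : WithTop ℕ∞) + 1) (prof (iterLap b u)) := by
      have := iterLap_contDiff b (m + 1) (by convert hu using 2; ring)
      exact prof_contDiff (by exact_mod_cast this)
    exact (contDiff_id.pow d).mul (contDiff_succ_iff_deriv.1 h1).2.2

lemma radChain_hasDerivAt {d : ℕ} {u : EuclideanSpace ℝ (Fin (d + 1)) → ℝ}
    (hr : ∀ x y : EuclideanSpace ℝ (Fin (d + 1)), ‖x‖ = ‖y‖ → u x = u y) (j : ℕ)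
    (hu : ContDiff ℝ (j + 1 : ℕ) u) {r : ℝ} (h0 : 0 < r) :
    HasDerivAt (radChain u j) (wt d j r * radChain u (j + 1) r) r := by
  have hd : r ^ d ≠ 0 := by positivity
  obtain ⟨b, rfl | rfl⟩ := j.even_or_odd'
  · rw [radChain_even, radChain_odd, wt_even (by simp), inv_mul_cancel_left₀ hd]
    have := iterLap_contDiff b 1 (by convert hu using 2; ring)
    exact ((prof_contDiff this).differentiable (by simp) r).hasDerivAt
  · rw [show 2 * b + 1 + 1 = 2 * (b + 1) by ring, radChain_odd, radChain_even, iterLap_succ,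
      wt_odd (by simp)]
    exact hasDerivAt_radial (iterLap_contDiff b 2 (by convert hu using 2; ring))
      (iterLap_radial hr b (hu.of_le (by norm_cast; omega))) h0

lemma radChain_chain {d k : ℕ} (hd : d ≠ 0) {u : EuclideanSpace ℝ (Fin (d + 1)) → ℝ}
    (hr : ∀ x y : EuclideanSpace ℝ (Fin (d + 1)), ‖x‖ = ‖y‖ → u x = u y)
    (hu : ContDiff ℝ (2 * k : ℕ) u) : Chain d (2 * k) (radChain u) := by
  refine ⟨fun j hj => ?_, fun j hj r h0 => ?_, fun j hj ho => ?_⟩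
  · exact (radChain_contDiff j 0 (hu.of_le (by norm_cast; omega))).continuous.continuousOn
  · exact radChain_hasDerivAt hr j (hu.of_le (by norm_cast)) h0.1
  · simp [radChain, ho, hd]

lemma wt_contDiffAt (d j : ℕ) (m : WithTop ℕ∞) : ContDiffAt ℝ m (wt d j) 1 := by
  by_cases h : Even j
  · have : wt d j = fun r => (r ^ d)⁻¹ := funext fun r => wt_even h r
    rw [this]
    exact (contDiffAt_id.pow d).inv (by simp)
  · have : wt d j = fun r => r ^ d := funext fun r => wt_odd h r
    rw [this]
    exact contDiffAt_id.pow d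

/-- The Dirichlet conditions pass from the profile to the first `k` functions of the chain. -/
lemma radChain_boundary {d k : ℕ} {u : EuclideanSpace ℝ (Fin (d + 1)) → ℝ}
    (hr : ∀ x y : EuclideanSpace ℝ (Fin (d + 1)), ‖x‖ = ‖y‖ → u x = u y)
    (hu : ContDiff ℝ (2 * k : ℕ) u) (h : ∀ m < k, iteratedDeriv m (prof u) 1 = 0) (j : ℕ) :
    ∀ m, j + m < k → iteratedDeriv m (radChain u j) 1 = 0 := by
  induction j with
  | zero =>
    intro m hm
    have : radChain u 0 = prof u := radChain_even u 0
    rw [this]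
    exact h m (by omega)
  | succ j ih =>
    intro m hm
    have hev : radChain u (j + 1) =ᶠ[𝓝 1] wt d (j + 1) * deriv (radChain u j) := by
      filter_upwards [lt_mem_nhds (zero_lt_one (α := ℝ))] with r h0
      rw [Pi.mul_apply, (radChain_hasDerivAt hr j (hu.of_le (by norm_cast; omega)) h0).deriv,
        ← mul_assoc, mul_comm (wt d (j + 1) r), wt_mul_succ d j h0, one_mul]
    have hc : ContDiff ℝ m (deriv (radChain u j)) := by
      have h1 : ContDiff ℝ ((m : WithTop ℕ∞) + 1) (radChain u j) := by
        exact_mod_cast radChain_contDiff j (m + 1) (hu.of_le (by norm_cast; omega))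
      exact (contDiff_succ_iff_deriv.1 h1).2.2
    rw [hev.iteratedDeriv_eq, iteratedDeriv_mul (wt_contDiffAt d (j + 1) m) hc.contDiffAt]
    refine Finset.sum_eq_zero fun i hi => ?_
    rw [← iteratedDeriv_succ', ih (m - i + 1) (by omega), mul_zero]

lemma iteratedDeriv_prof {d m : ℕ} {u : EuclideanSpace ℝ (Fin (d + 1)) → ℝ}
    (hu : ContDiff ℝ m u) :
    iteratedDeriv m (prof u) 1 = iteratedFDeriv ℝ m u (e0 d) (fun _ => e0 d) := by
  let g : ℝ →L[ℝ] EuclideanSpace ℝ (Fin (d + 1)) := (ContinuousLinearMap.id ℝ ℝ).smulRight (e0 d)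
  have hg : ∀ t, g t = t • e0 d := fun t => rfl
  have h := g.iteratedFDeriv_comp_right hu 1 le_rfl
  rw [iteratedDeriv_eq_iteratedFDeriv, show prof u = u ∘ g from rfl, h]
  simp [hg]

/-- The equation holds up to the boundary by continuity. -/
lemma radChain_eq {d k : ℕ} {q l : ℝ} (hq : 0 < q) {u : EuclideanSpace ℝ (Fin (d + 1)) → ℝ}
    (hu : ContDiff ℝ (2 * k : ℕ) u)
    (heq : ∀ x ∈ Metric.ball (0 : EuclideanSpace ℝ (Fin (d + 1))) 1,
      iterLap k u x - l * u x = |u x| ^ q * u x) {r : ℝ} (hr : r ∈ Set.Icc (0 : ℝ) 1) :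
    radChain u (2 * k) r = (l + |radChain u 0 r| ^ q) * radChain u 0 r := by
  have hc : Continuous (radChain u (2 * k)) :=
    (radChain_contDiff (2 * k) 0 (by simpa using hu)).continuous
  have hc0 : Continuous (radChain u 0) :=
    (radChain_contDiff 0 0 (hu.of_le (by norm_cast; omega))).continuous
  have h : Set.EqOn (radChain u (2 * k))
      (fun r => (l + |radChain u 0 r| ^ q) * radChain u 0 r) (Set.Ico 0 1) := by
    intro r hr
    have h0 : radChain u 0 = prof u := radChain_even u 0
    simp only [h0, radChain_even, prof]
    have := heq (r • e0 d) (by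
      rw [mem_ball_zero_iff, norm_smul_e0, abs_of_nonneg hr.1]; exact hr.2)
    linear_combination this
  refine h.closure hc ((continuous_const.add (hc0.abs.rpow_const fun _ => Or.inr hq.le)).mul hc0) ?_
  rwa [closure_Ico zero_ne_one]

theorem stmt1 (n k : ℕ) (hk : 2 ≤ 2 * k) (hn : 2 * k < n) (M : ℝ) (hM : 0 < M)
    (lam : ℕ → ℝ) (u : ℕ → EuclideanSpace ℝ (Fin n) → ℝ)
    (hsetup : BlowUpSetup n k M lam u) :
    Filter.Tendsto
      (fun i => ⨆ x : {x : EuclideanSpace ℝ (Fin n) //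
          x ∈ Metric.closedBall (0 : EuclideanSpace ℝ (Fin n)) 1},
        |u i (x : EuclideanSpace ℝ (Fin n))|)
      Filter.atTop Filter.atTop := by
  obtain ⟨hpos, hlam, hu, hrad, heq, hdir, hne, -⟩ := hsetup
  obtain ⟨d, rfl⟩ : ∃ d, n = d + 1 := ⟨n - 1, by omega⟩
  by_contra hnot
  obtain ⟨C, hfr⟩ : ∃ C, ∃ᶠ i in atTop, (⨆ x : {x : EuclideanSpace ℝ (Fin (d + 1)) //
      x ∈ Metric.closedBall (0 : EuclideanSpace ℝ (Fin (d + 1))) 1},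
        |u i (x : EuclideanSpace ℝ (Fin (d + 1)))|) ≤ C := by
    by_contra! h
    refine hnot (tendsto_atTop.2 fun C => ?_)
    exact (h C).mono fun i hi => hi.le
  obtain ⟨φ, hφ, hφC⟩ := Filter.extraction_of_frequently_atTop hfr
  have hden : (0 : ℝ) < ((d + 1 : ℕ) : ℝ) - 2 * k := by
    have : ((2 * k : ℕ) : ℝ) < ((d + 1 : ℕ) : ℝ) := by exact_mod_cast hn
    push_cast at this ⊢
    linarith
  have hk1 : (1 : ℝ) ≤ k := by exact_mod_cast (show 1 ≤ k by omega)
  have hqe : twoStar (d + 1) k - 2 = 4 * k / (((d + 1 : ℕ) : ℝ) - 2 * k) := by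
    unfold twoStar
    field_simp
    ring
  have hq : 0 < twoStar (d + 1) k - 2 := by rw [hqe]; positivity
  refine no_bounded_sequence (d := d) (k := k) (q := twoStar (d + 1) k - 2) (C := C) (by omega) hq
    ?_ (W := fun i => radChain (u (φ i))) (lam := fun i => lam (φ i)) (fun i => (hpos _).le)
    (hlam.comp hφ.tendsto_atTop) (fun i => radChain_chain (by omega) (hrad _) (hu _))
    (fun i => ((radChain_contDiff (2 * k) 0 (by simpa using hu (φ i))).continuous).continuousOn)
    (fun i r hr => radChain_eq hq (hu _) (heq _) hr) (fun i j hj => ?_) (fun i r hr => ?_)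
    (fun i => ?_)
  · rw [hqe]
    push_cast at hden ⊢
    obtain ⟨D, hD⟩ : ∃ D : ℝ, (d : ℝ) + 1 - 2 * k = D := ⟨_, rfl⟩
    rw [hD] at hden ⊢
    rw [show (d : ℝ) + 1 = D + 2 * k by linarith]
    field_simp
    ring
  · have := radChain_boundary (hrad (φ i)) (hu (φ i)) (fun m hm => by
      rw [iteratedDeriv_prof ((hu (φ i)).of_le (by norm_cast; omega))]
      exact hdir (φ i) (e0 d) (by simp [e0]) m hm) j 0 hj
    simpa using this
  · have hbdd : BddAbove (Set.range fun x : {x : EuclideanSpace ℝ (Fin (d + 1)) //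
        x ∈ Metric.closedBall (0 : EuclideanSpace ℝ (Fin (d + 1))) 1} => |u (φ i) x|) := by
      obtain ⟨K, hK⟩ := (isCompact_closedBall (0 : EuclideanSpace ℝ (Fin (d + 1)))
        1).exists_bound_of_continuousOn (hu (φ i)).continuous.continuousOn
      refine ⟨K, ?_⟩
      rintro _ ⟨x, rfl⟩
      exact hK x x.2
    have hmem : r • e0 d ∈ Metric.closedBall (0 : EuclideanSpace ℝ (Fin (d + 1))) 1 := by
      rw [mem_closedBall_zero_iff, norm_smul_e0, abs_of_nonneg hr.1]; exact hr.2
    exact (le_ciSup hbdd ⟨r • e0 d, hmem⟩).trans (hφC i)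
  · obtain ⟨x, hx, hx0⟩ := hne (φ i)
    refine ⟨‖x‖, ⟨norm_nonneg _, mem_closedBall_zero_iff.1 hx⟩, ?_⟩
    have h : u (φ i) (‖x‖ • e0 d) = u (φ i) x :=
      hrad _ _ _ (by rw [norm_smul_e0, abs_norm])
    exact fun h0 => hx0 (by rw [← h]; exact h0)
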